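/- arXiv:2509.20255 — 5 statements merged into one kernel-verified Lean document; each statement's English description precedes it below -/
import Mathlib

section
/- Let k ≥ 1 and n ≥ 3k+1 be integers, and let A be a (2k)×n sign matrix. Then there exists a set S ⊆ {2, …, n} of columns with |S| ≤ k such that the top travel of A_S is positive. -/
/-!
Two consecutive rows can always be passed within three columns at the cost of at most one negated
column. Writing `x₀, x₁, …` for the entries of the upper row from the current column on and
`y₀, y₁, …` for those below, suppose first that `x₁ = x₀`. Negating column `1` makes the travel
descend there with entry `-y₁`, and this fails to produce a change in the lower row only if
`y₂ = y₃ = -y₁`. In that case, if also `x₂ = x₀`, negating column `2` instead makes it descend there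
with entry `-y₂ ≠ y₃`. In the remaining cases the upper row changes by itself at column `1` or `2`,
and the following column can be negated, if need be, to force a change in the lower row.

The negated column lies strictly beyond the part of the travel already fixed, so iterating over `k`
pairs of rows costs at most `k` columns and ends by column `3k + 1`.
-/

/-- An `r × n` sign matrix: entries in `{+1, -1}` (1-indexed: `1 ≤ i ≤ r`, `1 ≤ j ≤ n`). -/
def IsSignMatrix (r n : ℕ) (A : ℕ → ℕ → ℤ) : Prop :=
  ∀ i j, 1 ≤ i → i ≤ r → 1 ≤ j → j ≤ n → A i j = 1 ∨ A i j = -1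

/-- `A_S`: the matrix obtained from `A` by negating every entry of each column in `S`. -/
def reorient (A : ℕ → ℕ → ℤ) (S : Finset ℕ) : ℕ → ℕ → ℤ :=
  fun i j => if j ∈ S then -A i j else A i j

/-- The first column `c'` with `c < c' ≤ n` where row `i` changes sign relative to
entry `a_{i,c}`, if such a column exists. -/
def rowChange (A : ℕ → ℕ → ℤ) (n i c : ℕ) : Option ℕ :=
  (List.range (n + 1)).find? fun c' => decide (c < c' ∧ A i c' ≠ A i c)

/-- `ttEntry A n i` is the column at which the top travel of `A` enters row `i`
(rows and columns 1-indexed): the travel enters row 1 at column 1, and, having entered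
row `i` at column `c`, it enters row `i+1` at the first sign change of row `i` after
column `c` (if any).  The value `some` at the "virtual" row `r+1` means the top travel
had a sign change in the bottom row `r`, i.e. the top travel is positive. -/
def ttEntry (A : ℕ → ℕ → ℤ) (n : ℕ) : ℕ → Option ℕ
  | 0 => none
  | 1 => some 1
  | i + 2 => (ttEntry A n (i + 1)).bind (rowChange A n (i + 1))

/-- The top travel of the `r × n` sign matrix `A` is positive: it contains two
horizontally consecutive entries of row `r` with opposite signs. -/
def ttPositive (A : ℕ → ℕ → ℤ) (r n : ℕ) : Prop :=
  (ttEntry A n (r + 1)).isSome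

/-- `A` is `k`-neighborly: for every set `S` of at most `k` columns, the top travel
of `A_S` is not positive. -/
def IsNeighborly (A : ℕ → ℕ → ℤ) (r n k : ℕ) : Prop :=
  ∀ S : Finset ℕ, S ⊆ Finset.Icc 1 n → S.card ≤ k → ¬ ttPositive (reorient A S) r n

/-- A plain travel of an `r × n` sign matrix, identified with the set `D` of columns of
its downward (vertical) moves: the columns `2 ≤ j₁ < ⋯ < j_{s-1} ≤ n` with `s ≤ r`. -/
def IsPlainTravel (r n : ℕ) (D : Finset ℕ) : Prop :=
  D ⊆ Finset.Icc 2 n ∧ D.card ≤ r - 1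

/-- The top travel of `A` follows exactly the plain travel with downward-move columns `D`:
it makes its downward moves precisely at the columns of `D` (entering rows `2, …, |D|+1`
there) and then ends at column `n` in row `|D|+1` without a further sign change. -/
def ttFollows (A : ℕ → ℕ → ℤ) (n : ℕ) (D : Finset ℕ) : Prop :=
  ttEntry A n (D.card + 2) = none ∧
  ∀ c, c ∈ D ↔ ∃ i, 2 ≤ i ∧ i ≤ D.card + 1 ∧ ttEntry A n i = some c

/-- The plain travel `D` of `A` is `k`-neighborly: there is a set `R` of columns such that
the top travel of `A_R` follows exactly the path `D` and `A_R` is a `k`-neighborly matrix. -/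
def IsNeighborlyTravel (A : ℕ → ℕ → ℤ) (r n k : ℕ) (D : Finset ℕ) : Prop :=
  ∃ R : Finset ℕ, R ⊆ Finset.Icc 1 n ∧ ttFollows (reorient A R) n D ∧
    IsNeighborly (reorient A R) r n k

section TopTravel

variable {A B : ℕ → ℕ → ℤ} {S T : Finset ℕ} {n i i' j c d : ℕ}

theorem reorient_apply_of_notMem (h : j ∉ S) : reorient A S i j = A i j :=
  if_neg h

theorem reorient_ne_zero_iff : reorient A S i j ≠ 0 ↔ A i j ≠ 0 := by
  by_cases h : j ∈ S <;> simp [reorient, h]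

theorem reorient_empty : reorient A ∅ = A := by
  ext
  simp [reorient]

theorem reorient_union_of_disjoint (h : Disjoint S T) :
    reorient A (S ∪ T) = reorient (reorient A S) T := by
  ext i j
  by_cases hT : j ∈ T
  · simp [reorient, hT, Finset.disjoint_right.1 h hT]
  · simp [reorient, hT]

theorem rowChange_eq_some_iff :
    rowChange A n i c = some d ↔
      c < d ∧ d ≤ n ∧ A i d ≠ A i c ∧ ∀ j, c < j → j < d → A i j = A i c := by
  rw [rowChange, List.find?_range_eq_some]
  simp only [decide_eq_true_eq, List.mem_range]
  grind

theorem rowChange_eq_some_succ_iff :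
    rowChange A n i c = some (c + 1) ↔ c + 1 ≤ n ∧ A i (c + 1) ≠ A i c := by
  rw [rowChange_eq_some_iff]
  grind

theorem rowChange_eq_some_add_two_iff :
    rowChange A n i c = some (c + 2) ↔
      c + 2 ≤ n ∧ A i (c + 1) = A i c ∧ A i (c + 2) ≠ A i c := by
  rw [rowChange_eq_some_iff]
  grind

theorem rowChange_eq_some_congr (hAB : ∀ j, c ≤ j → j ≤ d → A i j = B i j)
    (h : rowChange A n i c = some d) : rowChange B n i c = some d := by
  obtain ⟨hcd, hdn, hne, heq⟩ := rowChange_eq_some_iff.1 h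
  rw [rowChange_eq_some_iff, ← hAB d hcd.le le_rfl, ← hAB c le_rfl hcd.le]
  exact ⟨hcd, hdn, hne, fun j hj hj' ↦ hAB j hj.le hj'.le ▸ heq j hj hj'⟩

theorem ttEntry_eq_some_congr (hAB : ∀ i, ∀ j ≤ c, A i j = B i j)
    (h : ttEntry A n i = some c) : ttEntry B n i = some c := by
  induction i using ttEntry.induct generalizing c with
  | case1 => exact h
  | case2 => exact h
  | case3 i ih =>
    obtain ⟨b, hb, hbc⟩ := Option.bind_eq_some_iff.1 h
    have hlt : b < c := (rowChange_eq_some_iff.1 hbc).1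
    exact Option.bind_eq_some_iff.2 ⟨b, ih (fun i j hj ↦ hAB i j (hj.trans hlt.le)) hb,
      rowChange_eq_some_congr (fun j _ hj ↦ hAB _ j hj) hbc⟩

theorem rowChange_reorient_eq_some (hT : ∀ j ∈ T, d < j) (h : rowChange A n i c = some d) :
    rowChange (reorient A T) n i c = some d :=
  rowChange_eq_some_congr
    (fun j _ hj ↦ (reorient_apply_of_notMem fun hjT ↦ (hT j hjT).not_ge hj).symm) h

theorem ttEntry_reorient_eq_some (hT : ∀ j ∈ T, c < j) (h : ttEntry A n i = some c) :
    ttEntry (reorient A T) n i = some c :=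
  ttEntry_eq_some_congr
    (fun _ j hj ↦ (reorient_apply_of_notMem fun hjT ↦ (hT j hjT).not_ge hj).symm) h

theorem exists_rowChange_reorient_eq_some_succ (hc : c < n) (h₀ : A i c ≠ 0) :
    ∃ T ⊆ {c + 1}, rowChange (reorient A T) n i c = some (c + 1) := by
  simp only [rowChange_eq_some_succ_iff]
  by_cases h : A i (c + 1) = A i c
  · refine ⟨{c + 1}, subset_rfl, hc, ?_⟩
    simpa [reorient, h] using neg_ne_self.2 h₀
  · exact ⟨∅, Finset.empty_subset _, hc, by rwa [reorient_empty]⟩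

theorem exists_rowChange_bind_reorient_of_rowChange (h : rowChange A n i c = some d)
    (hd : d < n) (h₀ : A i' d ≠ 0) :
    ∃ T ⊆ {d + 1}, (rowChange (reorient A T) n i c).bind (rowChange (reorient A T) n i') =
      some (d + 1) := by
  obtain ⟨T, hT, hT'⟩ := exists_rowChange_reorient_eq_some_succ hd h₀
  have hlt : ∀ j ∈ T, d < j := fun j hj ↦ by simp [Finset.mem_singleton.1 (hT hj)]
  exact ⟨T, hT, Option.bind_eq_some_iff.2 ⟨d, rowChange_reorient_eq_some hlt h, hT'⟩⟩

theorem exists_rowChange_bind_reorient_singleton_add_one (hc : c + 3 ≤ n) (hi : A i c ≠ 0)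
    (heq : A i (c + 1) = A i c)
    (hne : A i' (c + 2) ≠ -A i' (c + 1) ∨ A i' (c + 3) ≠ -A i' (c + 1)) :
    ∃ d, c + 1 < d ∧ d ≤ c + 3 ∧
      (rowChange (reorient A {c + 1}) n i c).bind (rowChange (reorient A {c + 1}) n i') =
        some d := by
  have hrow : rowChange (reorient A {c + 1}) n i c = some (c + 1) := by
    rw [rowChange_eq_some_succ_iff]
    exact ⟨by omega, by simpa [reorient, heq] using neg_ne_self.2 hi⟩
  rw [hrow, Option.bind_some]
  by_cases h₂ : A i' (c + 2) = -A i' (c + 1)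
  · refine ⟨c + 3, by omega, le_rfl, rowChange_eq_some_add_two_iff.2 ⟨hc, ?_⟩⟩
    simpa [reorient, h₂] using hne
  · refine ⟨c + 2, by omega, by omega, rowChange_eq_some_succ_iff.2 ⟨by omega, ?_⟩⟩
    simpa [reorient] using h₂

theorem rowChange_bind_reorient_singleton_add_two (hc : c + 3 ≤ n) (hi : A i c ≠ 0)
    (hi' : A i' (c + 2) ≠ 0) (h₁ : A i (c + 1) = A i c) (h₂ : A i (c + 2) = A i c)
    (h₃ : A i' (c + 3) = A i' (c + 2)) :
    (rowChange (reorient A {c + 2}) n i c).bind (rowChange (reorient A {c + 2}) n i') =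
      some (c + 3) := by
  refine Option.bind_eq_some_iff.2 ⟨c + 2, rowChange_eq_some_add_two_iff.2 ⟨by omega, ?_⟩,
    rowChange_eq_some_succ_iff.2 ⟨hc, ?_⟩⟩
  · simpa [reorient, h₁, h₂] using neg_ne_self.2 hi
  · simpa [reorient, h₃] using self_ne_neg.2 hi'

theorem exists_rowChange_bind_reorient (hc : c + 3 ≤ n) (hi : A i c ≠ 0)
    (hi' : A i' (c + 1) ≠ 0) :
    ∃ t d, c < t ∧ t ≤ d ∧ d ≤ c + 3 ∧ ∃ T ⊆ {t},
      (rowChange (reorient A T) n i c).bind (rowChange (reorient A T) n i') = some d := by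
  by_cases h₁ : A i (c + 1) = A i c
  · by_cases hy : A i' (c + 2) = -A i' (c + 1) ∧ A i' (c + 3) = -A i' (c + 1)
    · obtain ⟨hy₂, hy₃⟩ := hy
      have hy₀ : A i' (c + 2) ≠ 0 := hy₂ ▸ neg_ne_zero.2 hi'
      by_cases h₂ : A i (c + 2) = A i c
      · exact ⟨c + 2, c + 3, by omega, by omega, le_rfl, {c + 2}, subset_rfl,
          rowChange_bind_reorient_singleton_add_two hc hi hy₀ h₁ h₂ (hy₃.trans hy₂.symm)⟩
      · have hrow : rowChange A n i c = some (c + 2) :=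
          rowChange_eq_some_add_two_iff.2 ⟨by omega, h₁, h₂⟩
        exact ⟨c + 3, c + 3, by omega, le_rfl, le_rfl,
          exists_rowChange_bind_reorient_of_rowChange hrow hc hy₀⟩
    · obtain ⟨d, hcd, hd, h⟩ :=
        exists_rowChange_bind_reorient_singleton_add_one hc hi h₁ (not_and_or.1 hy)
      exact ⟨c + 1, d, by omega, hcd.le, hd, {c + 1}, subset_rfl, h⟩
  · have hrow : rowChange A n i c = some (c + 1) :=
      rowChange_eq_some_succ_iff.2 ⟨by omega, h₁⟩
    exact ⟨c + 2, c + 2, by omega, le_rfl, by omega,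
      exists_rowChange_bind_reorient_of_rowChange hrow (by omega) hi'⟩

theorem ttEntry_add_two (hi : 1 ≤ i) (h : ttEntry A n i = some c) :
    ttEntry A n (i + 2) = (rowChange A n i c).bind (rowChange A n (i + 1)) := by
  obtain ⟨i, rfl⟩ := Nat.exists_eq_add_of_le' hi
  simp only [ttEntry, h, Option.bind_some]

theorem exists_ttEntry_reorient_eq_some (m : ℕ) (hm : 3 * m + 1 ≤ n)
    (hA : ∀ i j, 1 ≤ i → i ≤ 2 * m → 1 ≤ j → j ≤ n → A i j ≠ 0) :
    ∃ S c, S ⊆ Finset.Icc 2 c ∧ S.card ≤ m ∧ 1 ≤ c ∧ c ≤ 3 * m + 1 ∧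
      ttEntry (reorient A S) n (2 * m + 1) = some c := by
  induction m with
  | zero => exact ⟨∅, 1, Finset.empty_subset _, le_rfl, le_rfl, le_rfl, rfl⟩
  | succ m ih =>
    obtain ⟨S, c, hS, hScard, hc, hcm, hentry⟩ :=
      ih (by omega) fun i j hi hi' ↦ hA i j hi (by omega)
    obtain ⟨t, d, hct, htd, hd, T, hT, hpass⟩ :=
      exists_rowChange_bind_reorient (A := reorient A S) (n := n) (i := 2 * m + 1)
        (i' := 2 * m + 2) (c := c) (by omega)
        (reorient_ne_zero_iff.2 (hA _ _ (by omega) (by omega) hc (by omega)))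
        (reorient_ne_zero_iff.2 (hA _ _ (by omega) (by omega) (by omega) (by omega)))
    have hTc : ∀ j ∈ T, c < j := fun j hj ↦ by rwa [Finset.mem_singleton.1 (hT hj)]
    have hdisj : Disjoint S T := Finset.disjoint_left.2 fun j hjS hjT ↦
      (hTc j hjT).not_ge (Finset.mem_Icc.1 (hS hjS)).2
    have hsub : S ∪ T ⊆ Finset.Icc 2 d :=
      Finset.union_subset (hS.trans (Finset.Icc_subset_Icc_right (by omega)))
        (hT.trans (Finset.singleton_subset_iff.2 (Finset.mem_Icc.2 ⟨by omega, htd⟩)))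
    have hcard : (S ∪ T).card ≤ m + 1 :=
      (Finset.card_union_le S T).trans (add_le_add hScard (Finset.card_le_card hT))
    refine ⟨S ∪ T, d, hsub, hcard, by omega, by omega, ?_⟩
    rw [reorient_union_of_disjoint hdisj, ← hpass]
    exact ttEntry_add_two (by omega) (ttEntry_reorient_eq_some hTc hentry)

end TopTravel

theorem statement_0_general (k n : ℕ) (hn : 3 * k + 1 ≤ n) (A : ℕ → ℕ → ℤ)
    (hA : ∀ i j, 1 ≤ i → i ≤ 2 * k → 1 ≤ j → j ≤ n → A i j ≠ 0) :
    ∃ S : Finset ℕ, S ⊆ Finset.Icc 2 n ∧ S.card ≤ k ∧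
      ttPositive (reorient A S) (2 * k) n := by
  obtain ⟨S, c, hS, hcard, -, hc, h⟩ := exists_ttEntry_reorient_eq_some k hn hA
  exact ⟨S, hS.trans (Finset.Icc_subset_Icc_right (hc.trans hn)), hcard,
    Option.isSome_of_eq_some h⟩

/-- For `k ≥ 1`, `n ≥ 3k+1` and any `(2k) × n` sign matrix `A`, there is a
set `S ⊆ {2,…,n}` of columns with `|S| ≤ k` such that the top travel of `A_S` is positive. -/
theorem statement_0 (k n : ℕ) (hk : 1 ≤ k) (hn : 3 * k + 1 ≤ n)
    (A : ℕ → ℕ → ℤ) (hA : IsSignMatrix (2 * k) n A) :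
    ∃ S : Finset ℕ, S ⊆ Finset.Icc 2 n ∧ S.card ≤ k ∧
      ttPositive (reorient A S) (2 * k) n :=
  statement_0_general k n hn A fun i j hi hi' hj hj' ↦ by
    obtain h | h := hA i j hi hi' hj hj' <;> simp [h]
end

section
/- Let k ≥ 1, r = 2k+2 and n ≥ 6k+2 be integers. Then every r×n sign matrix has at most n k-neighborly plain travels. -/
/-!
Let `r = 2k + 2`. If `A_R` is `k`-neighborly, then the column signs of `R` disagree with the signed
circuit on each `2k + 3` columns in `k + 1` or `k + 2` places, so they pair to `±1` with it. A
circuit whose last two columns are `y < z` splits into a part on a set `U` of `2k + 1` columns to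
the left of `y` and a part on `y, z`, which depends on row `r` only and contributes `0` or `±2`.
Among the columns `n - 2, n - 1, n` some two contribute `0`, so the pairing with the part on `U` is
itself `±1`. If `y, z` contribute `±2`, this determines the pairing on `U`, and with it the product
of the signs over `U`; varying `U` among `2k + 2` columns determines each single sign. The same
works from the other end, with row `1` and the columns `1, 2, 3`. Hence neighborly reorientations
shatter no triple of columns containing column `4`, which has three columns on either side. Since
they are closed under complement, those that fix column `4` shatter no pair, and by Pajor's lemma
there are at most `n` of them.
-/

namespace LawrenceMatroid

open Finset

section ShatteredSets

variable {α : Type*} [DecidableEq α]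

theorem shatters_insert_of_sdiff_mem {𝒩 : Finset (Finset α)} {X s : Finset α} {p : α}
    (hcompl : ∀ R ∈ 𝒩, X \ R ∈ 𝒩) (hp : p ∈ X) (hs : s ⊆ X)
    (h : {R ∈ 𝒩 | p ∉ R}.Shatters s) : 𝒩.Shatters (insert p s) := by
  intro t ht
  by_cases hpt : p ∈ t
  · obtain ⟨R, hR, hRt⟩ := h (sdiff_subset : s \ t ⊆ s)
    obtain ⟨hR𝒩, _⟩ := mem_filter.1 hR
    refine ⟨X \ R, hcompl R hR𝒩, ?_⟩
    ext j
    have hj := Finset.ext_iff.1 hRt j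
    have hjt := @ht j
    have hjX := @hs j
    grind
  · obtain ⟨R, hR, hRt⟩ := h ((subset_insert_iff_of_notMem hpt).1 ht)
    obtain ⟨hR𝒩, hpR⟩ := mem_filter.1 hR
    exact ⟨R, hR𝒩, by rw [insert_inter_of_notMem hpR, hRt]⟩

/-- The signs by which the reorientation of a set `R` multiplies the columns. -/
def colSign (R : Finset α) (j : α) : ℤˣ := if j ∈ R then -1 else 1

theorem colSign_sdiff {X R : Finset α} {j : α} (hj : j ∈ X) :
    colSign (X \ R) j = -colSign R j := by
  by_cases hR : j ∈ R <;> simp [colSign, hj, hR]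

theorem colSign_filter_mul {F : Finset α} {w : α → ℤˣ} {c : ℤˣ} {j : α} (hj : j ∈ F) :
    colSign {i ∈ F | w i = -c} j * c = w j := by
  by_cases hw : w j = -c
  · simp [colSign, hj, hw]
  · simp [colSign, Int.units_ne_iff_eq_neg.1 hw]

theorem exists_colSign_eq_of_shatters {𝒜 : Finset (Finset α)} {s : Finset α} (h : 𝒜.Shatters s)
    (u : α → ℤˣ) : ∃ R ∈ 𝒜, ∀ j ∈ s, colSign R j = u j := by
  obtain ⟨R, hR, hRs⟩ := h (filter_subset (u · = -1) s)
  refine ⟨R, hR, fun j hj ↦ ?_⟩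
  have hjR : j ∈ R ↔ u j = -1 := by simpa [hj] using Finset.ext_iff.1 hRs j
  rcases Int.units_eq_one_or (u j) with hu | hu <;> simp [colSign, hjR, hu]

theorem card_filter_notMem_le_of_not_shatters {𝒩 : Finset (Finset α)} {X : Finset α} {p : α}
    (hX : ∀ R ∈ 𝒩, R ⊆ X) (hcompl : ∀ R ∈ 𝒩, X \ R ∈ 𝒩) (hp : p ∈ X)
    (h : ∀ a ∈ X.erase p, ∀ b ∈ X.erase p, a ≠ b → ¬ 𝒩.Shatters {p, a, b}) :
    #{R ∈ 𝒩 | p ∉ R} ≤ #X := by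
  have hsub : {R ∈ 𝒩 | p ∉ R}.shatterer ⊆ insert ∅ ((X.erase p).image singleton) := by
    intro s hs
    rw [mem_shatterer] at hs
    have hsX : s ⊆ X.erase p := by
      obtain ⟨R, hR, hsR⟩ := hs.exists_superset
      obtain ⟨hR𝒩, hpR⟩ := mem_filter.1 hR
      exact subset_erase.2 ⟨hsR.trans (hX R hR𝒩), fun hps ↦ hpR (hsR hps)⟩
    rcases s.eq_empty_or_nonempty with rfl | ⟨a, ha⟩
    · exact mem_insert_self _ _
    · have hsa : s = {a} := by
        refine eq_singleton_iff_unique_mem.2 ⟨ha, fun b hb ↦ ?_⟩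
        by_contra hba
        have hab : ({a, b} : Finset α) ⊆ s := insert_subset ha (singleton_subset_iff.2 hb)
        have habX := hab.trans hsX
        exact h a (hsX ha) b (hsX hb) (Ne.symm hba) <| shatters_insert_of_sdiff_mem hcompl hp
          (habX.trans (erase_subset p X)) (hs.mono_right hab)
      exact mem_insert_of_mem (mem_image.2 ⟨a, hsX ha, hsa.symm⟩)
  calc #{R ∈ 𝒩 | p ∉ R}
    _ ≤ #{R ∈ 𝒩 | p ∉ R}.shatterer := card_le_card_shatterer _
    _ ≤ #((X.erase p).image singleton) + 1 := (card_le_card hsub).trans (card_insert_le _ _)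
    _ ≤ #(X.erase p) + 1 := Nat.add_le_add_right card_image_le 1
    _ = #X := card_erase_add_one hp

end ShatteredSets

section SignSums

variable {α : Type*} {F : Finset α}

theorem card_filter_one_add_card_filter_neg_one (w : α → ℤˣ) :
    #{j ∈ F | w j = 1} + #{j ∈ F | w j = -1} = #F := by
  rw [← card_filter_add_card_filter_not (s := F) (w · = 1)]
  simp only [← ne_eq, Int.units_ne_iff_eq_neg]

theorem sum_units_eq_card_sub_card (w : α → ℤˣ) :
    ∑ j ∈ F, (w j : ℤ) = #{j ∈ F | w j = 1} - #{j ∈ F | w j = -1} := by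
  have hw (j : α) : (w j : ℤ) = (if w j = 1 then 1 else 0) - (if w j = -1 then 1 else 0) := by
    rcases Int.units_eq_one_or (w j) with h | h <;> simp [h]
  simp only [hw, sum_sub_distrib, sum_boole]

theorem prod_units_eq_neg_one_pow (w : α → ℤˣ) :
    ∏ j ∈ F, w j = (-1) ^ #{j ∈ F | w j = -1} := by
  have hw (j : α) : w j = if w j = -1 then -1 else 1 := by
    rcases Int.units_eq_one_or (w j) with h | h <;> simp [h]
  rw [prod_congr rfl fun j _ ↦ hw j, prod_ite, prod_const, prod_const_one, mul_one]

theorem prod_units_eq_of_sum_units_eq {w w' : α → ℤˣ}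
    (h : ∑ j ∈ F, (w j : ℤ) = ∑ j ∈ F, (w' j : ℤ)) : ∏ j ∈ F, w j = ∏ j ∈ F, w' j := by
  have hw := card_filter_one_add_card_filter_neg_one (F := F) w
  have hw' := card_filter_one_add_card_filter_neg_one (F := F) w'
  rw [sum_units_eq_card_sub_card, sum_units_eq_card_sub_card] at h
  rw [prod_units_eq_neg_one_pow, prod_units_eq_neg_one_pow]
  congr 1
  omega

theorem exists_subset_prod_ne_prod {e e' : α → ℤˣ} {x : α} (hx : x ∈ F)
    (hxe : e x ≠ e' x) {m : ℕ} (hm : Odd m) (hmF : m < #F) :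
    ∃ U ⊆ F, #U = m ∧ ∏ j ∈ U, e j ≠ ∏ j ∈ U, e' j := by
  classical
  obtain ⟨V, hxV, hVF, hV⟩ := exists_subsuperset_card_eq (n := m + 1)
    (singleton_subset_iff.2 hx) (by simp) hmF
  by_contra! hU
  have hprod : ∀ j ∈ V, ∏ i ∈ V, e i * e' i = e j * e' j := by
    intro j hj
    rw [prod_mul_distrib, ← mul_prod_erase V e hj, ← mul_prod_erase V e' hj,
      hU (V.erase j) ((erase_subset _ _).trans hVF) (by rw [card_erase_of_mem hj, hV]; rfl),
      mul_mul_mul_comm, Int.units_mul_self, mul_one]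
  have hxV := singleton_subset_iff.1 hxV
  have hne : e x * e' x = -1 := by
    rw [Int.units_ne_iff_eq_neg.1 hxe, neg_mul, Int.units_mul_self]
  have hone : ∏ i ∈ V, e i * e' i = 1 := by
    rw [prod_congr rfl fun j hj ↦ ((hprod j hj).symm.trans (hprod x hxV)).trans hne, prod_const, hV,
      hm.add_one.neg_one_pow]
  exact absurd ((hprod x hxV).symm.trans hone) (by rw [hne]; decide)

end SignSums

section TopTravel

variable {B B' : ℕ → ℕ → ℤ} {n : ℕ}

theorem ttEntry_succ {i : ℕ} (hi : 1 ≤ i) :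
    ttEntry B n (i + 1) = (ttEntry B n i).bind (rowChange B n i) := by
  obtain ⟨i, rfl⟩ := Nat.exists_eq_add_of_le' hi
  rfl

theorem rowChange_eq_some_iff {i c d : ℕ} :
    rowChange B n i c = some d ↔
      (c < d ∧ B i d ≠ B i c) ∧ d ≤ n ∧ ∀ j < d, c < j → B i j = B i c := by
  simp [rowChange, or_iff_not_imp_left]

theorem exists_rowChange_le {i c d : ℕ} (hcd : c < d) (hdn : d ≤ n) (hd : B i d ≠ B i c) :
    ∃ c' ≤ d, rowChange B n i c = some c' := by
  have hex : ∃ j, c < j ∧ B i j ≠ B i c := ⟨d, hcd, hd⟩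
  have hle : Nat.find hex ≤ d := Nat.find_min' hex ⟨hcd, hd⟩
  refine ⟨Nat.find hex, hle, rowChange_eq_some_iff.2 ⟨Nat.find_spec hex, hle.trans hdn, ?_⟩⟩
  exact fun j hj hcj ↦ by_contra fun hne ↦ Nat.find_min hex hj ⟨hcj, hne⟩

theorem mem_Icc_of_ttEntry_eq_some (hn : 1 ≤ n) {i c : ℕ} (h : ttEntry B n i = some c) :
    c ∈ Icc 1 n := by
  match i, h with
  | 1, h => simpa [← Option.some.inj h] using hn
  | i + 2, h =>
    obtain ⟨d, -, hc⟩ := Option.bind_eq_some_iff.1 h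
    obtain ⟨⟨hdc, -⟩, hcn, -⟩ := rowChange_eq_some_iff.1 hc
    exact mem_Icc.2 ⟨by omega, hcn⟩

theorem ttEntry_eq_of_neg (hn : 1 ≤ n) (h : ∀ i, ∀ j ∈ Icc 1 n, B' i j = -B i j) (i : ℕ) :
    ttEntry B' n i = ttEntry B n i := by
  induction i with
  | zero => rfl
  | succ i ih =>
    rcases Nat.eq_zero_or_pos i with rfl | hi
    · rfl
    · rw [ttEntry_succ hi, ttEntry_succ hi, ih]
      refine Option.bind_congr fun c hc ↦ List.find?_congr fun j hj ↦ ?_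
      have hc := mem_Icc_of_ttEntry_eq_some hn hc
      have hjn : j ≤ n := Nat.lt_succ_iff.1 (List.mem_range.1 hj)
      refine decide_eq_decide.2 (and_congr_right fun hcj ↦ ?_)
      rw [h i j (mem_Icc.2 ⟨by omega, hjn⟩), h i c hc, ne_eq, ne_eq, neg_inj]

theorem ttEntry_eq_none_of_le {i i' : ℕ} (hi : 1 ≤ i) (hii' : i ≤ i') (h : ttEntry B n i = none) :
    ttEntry B n i' = none := by
  induction i', hii' using Nat.le_induction with
  | base => exact h
  | succ i' hii' ih => rw [ttEntry_succ (hi.trans hii'), ih, Option.bind_none]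

theorem mem_iff_of_ttFollows {D : Finset ℕ} (h : ttFollows B n D) (c : ℕ) :
    c ∈ D ↔ ∃ i, 2 ≤ i ∧ ttEntry B n i = some c := by
  rw [h.2 c]
  refine exists_congr fun i ↦ and_congr_right fun _ ↦ and_iff_right_of_imp fun hc ↦ ?_
  by_contra hi
  have hnone := ttEntry_eq_none_of_le (by omega) (by omega : #D + 2 ≤ i) h.1
  exact absurd (hc.symm.trans hnone) (Option.some_ne_none c)

theorem eq_of_ttFollows {D D' : Finset ℕ} (h : ttFollows B n D) (h' : ttFollows B n D') :
    D = D' := by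
  ext c
  rw [mem_iff_of_ttFollows h, mem_iff_of_ttFollows h']

end TopTravel

section Chains

/-- The pair of consecutive columns at positions `t` and `t + 1` of `L` has distinct entries in row
`i + t` of `B`, for every `t`. A top travel that enters row `i` not after the head of `L` moves down
at least once per such pair. -/
def IsAlternating {α : Type*} (B : ℕ → ℕ → α) : ℕ → List ℕ → Prop
  | i, a :: b :: L => B i a ≠ B i b ∧ IsAlternating B (i + 1) (b :: L)
  | _, _ => True

theorem IsAlternating.imp {α β : Type*} {B : ℕ → ℕ → α} {B' : ℕ → ℕ → β} {i : ℕ} {L : List ℕ}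
    (h : IsAlternating B i L)
    (hBB' : ∀ i', i ≤ i' → i' + 1 < i + L.length → ∀ a ∈ L, ∀ b ∈ L,
      B i' a ≠ B i' b → B' i' a ≠ B' i' b) : IsAlternating B' i L := by
  match L, h with
  | [], _ => trivial
  | [_], _ => trivial
  | a :: b :: L, ⟨hab, h⟩ =>
    refine ⟨hBB' i le_rfl (by simp) a (by simp) b (by simp) hab, h.imp fun i' hi hi' c hc d hd ↦ ?_⟩
    exact hBB' i' (by omega) (by simp only [List.length_cons] at hi' ⊢; omega)
      c (List.mem_cons_of_mem a hc) d (List.mem_cons_of_mem a hd)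

theorem ttEntry_isSome_of_isAlternating {B : ℕ → ℕ → ℤ} {n a i c : ℕ} {L : List ℕ} (hi : 1 ≤ i)
    (hc : ttEntry B n i = some c) (hca : c ≤ a) (hL : (a :: L).Pairwise (· < ·))
    (hLn : ∀ b ∈ L, b ≤ n) (h : IsAlternating B i (a :: L)) :
    (ttEntry B n (i + L.length)).isSome := by
  induction L generalizing a i c with
  | nil => simp [hc]
  | cons b L ih =>
    obtain ⟨hab, h⟩ := h
    obtain ⟨haL, hbL⟩ := List.pairwise_cons.1 hL
    have hlt : a < b := haL b (by simp)
    have hbn : b ≤ n := hLn b (by simp)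
    obtain ⟨d, hcd, hdb, hd⟩ : ∃ d, c < d ∧ d ≤ b ∧ B i d ≠ B i c := by
      by_cases hbc : B i b = B i c
      · have hac : B i a ≠ B i c := hbc ▸ hab
        exact ⟨a, lt_of_le_of_ne hca (by rintro rfl; exact hac rfl), hlt.le, hac⟩
      · exact ⟨b, hca.trans_lt hlt, le_rfl, hbc⟩
    obtain ⟨c', hc'd, hc'⟩ := exists_rowChange_le hcd (hdb.trans hbn) hd
    have hnext : ttEntry B n (i + 1) = some c' := by rw [ttEntry_succ hi, hc, Option.bind_some, hc']
    rw [List.length_cons, Nat.add_comm L.length, ← add_assoc]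
    exact ih (by omega) hnext (hc'd.trans hdb) hbL (fun x hx ↦ hLn x (by simp [hx])) h

/-- The column signs that make the rows `i, i + 1, …` of `σ` alternate along the nodup list `L`;
the values outside `L` are irrelevant. For `i = 1` and `r + 1` increasing columns they form a signed
circuit of the rank `r` Lawrence oriented matroid of `σ`. -/
def chainSign (σ : ℕ → ℕ → ℤˣ) : ℕ → List ℕ → ℕ → ℤˣ
  | i, a :: b :: L => fun j ↦ if j = a then 1 else -(σ i a * σ i b) * chainSign σ (i + 1) (b :: L) j
  | _, _ => 1

/-- The pairing on the columns of `L` of the sign vector `chainSign σ i L` with the column signs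
`e`. -/
def chainSum (σ : ℕ → ℕ → ℤˣ) (e : ℕ → ℤˣ) (i : ℕ) (L : List ℕ) : ℤ :=
  ∑ j ∈ L.toFinset, ((chainSign σ i L j * e j : ℤˣ) : ℤ)

variable {σ : ℕ → ℕ → ℤˣ} {e e' : ℕ → ℤˣ} {i a b : ℕ} {L : List ℕ}

theorem chainSign_head : chainSign σ i (a :: L) a = 1 := by
  cases L <;> simp [chainSign]

theorem chainSign_cons_cons_of_ne {j : ℕ} (hj : j ≠ a) :
    chainSign σ i (a :: b :: L) j = -(σ i a * σ i b) * chainSign σ (i + 1) (b :: L) j :=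
  if_neg hj

theorem isAlternating_chainSign (hL : L.Nodup) :
    IsAlternating (fun i' j ↦ chainSign σ i L j * σ i' j) i L := by
  induction L generalizing i with
  | nil => trivial
  | cons a L ih =>
    match L with
    | [] => trivial
    | b :: L =>
      obtain ⟨haL, hbL⟩ := List.nodup_cons.1 hL
      have hne : ∀ j ∈ b :: L, j ≠ a := fun j hj hja ↦ haL (hja ▸ hj)
      refine ⟨?_, (ih hbL (i := i + 1)).imp fun i' _ _ c hc d hd hcd ↦ ?_⟩
      · beta_reduce
        rw [chainSign_head, chainSign_cons_cons_of_ne (hne b (by simp)), chainSign_head, one_mul,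
          mul_one, neg_mul, mul_assoc, Int.units_mul_self, mul_one]
        exact units_ne_neg_self _
      · simpa [chainSign_cons_cons_of_ne (hne c hc), chainSign_cons_cons_of_ne (hne d hd),
          mul_assoc] using hcd

theorem chainSum_singleton : chainSum σ e i [a] = e a := by
  simp [chainSum, chainSign]

theorem chainSum_cons_cons (h : (a :: b :: L).Nodup) :
    chainSum σ e i (a :: b :: L) = e a - σ i a * σ i b * chainSum σ e (i + 1) (b :: L) := by
  have haL : a ∉ (b :: L).toFinset := fun ha ↦ (List.nodup_cons.1 h).1 (List.mem_toFinset.1 ha)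
  rw [chainSum, List.toFinset_cons, sum_insert haL, chainSign_head, one_mul, chainSum, mul_sum,
    sub_eq_add_neg, ← sum_neg_distrib]
  congr 1
  refine sum_congr rfl fun j hj ↦ ?_
  rw [chainSign_cons_cons_of_ne (ne_of_mem_of_not_mem hj haL)]
  push_cast
  ring

theorem chainSum_pair (hab : a ≠ b) : chainSum σ e i [a, b] = e a - σ i a * σ i b * e b := by
  rw [chainSum_cons_cons (by simpa using hab), chainSum_singleton]

theorem chainSum_append {P Q : List ℕ} (hP : P ≠ []) (hQ : Q ≠ []) (h : (P ++ Q).Nodup) :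
    ∃ τ : ℤˣ, ∀ e, chainSum σ e i (P ++ Q) =
      chainSum σ e i P + τ * chainSum σ e (i + P.length) Q := by
  induction P generalizing i with
  | nil => exact absurd rfl hP
  | cons a P ih =>
    match P, Q, hQ with
    | [], b :: Q, _ =>
      refine ⟨-(σ i a * σ i b), fun e ↦ ?_⟩
      rw [List.singleton_append, chainSum_cons_cons h, chainSum_singleton]
      simp [sub_eq_add_neg]
    | b :: P, Q, _ =>
      obtain ⟨τ, hτ⟩ := ih (by simp) h.of_cons (i := i + 1)
      refine ⟨-(σ i a * σ i b) * τ, fun e ↦ ?_⟩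
      rw [chainSum_cons_cons h.of_append_left, List.cons_append, List.cons_append,
        chainSum_cons_cons (L := P ++ Q) h, ← List.cons_append, hτ,
        List.length_cons (a := a), ← add_assoc, Nat.add_right_comm i]
      push_cast
      ring

theorem prod_eq_prod_of_chainSum_eq (h : chainSum σ e i L = chainSum σ e' i L) :
    ∏ j ∈ L.toFinset, e j = ∏ j ∈ L.toFinset, e' j := by
  have hprod := prod_units_eq_of_sum_units_eq h
  rw [prod_mul_distrib, prod_mul_distrib] at hprod
  exact mul_left_cancel hprod

end Chains

section Neighborly

variable {A : ℕ → ℕ → ℤ} {r n k : ℕ} {R : Finset ℕ} {σ : ℕ → ℕ → ℤˣ}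

theorem reorient_eq_colSign_mul (A : ℕ → ℕ → ℤ) (R : Finset ℕ) (i j : ℕ) :
    reorient A R i j = colSign R j * A i j := by
  by_cases hj : j ∈ R <;> simp [reorient, colSign, hj]

theorem ttEntry_reorient_sdiff (hn : 1 ≤ n) (i : ℕ) :
    ttEntry (reorient A (Icc 1 n \ R)) n i = ttEntry (reorient A R) n i :=
  ttEntry_eq_of_neg hn (fun i j hj ↦ by
    rw [reorient_eq_colSign_mul, reorient_eq_colSign_mul, colSign_sdiff hj, Units.val_neg,
      neg_mul]) i

theorem ttEntry_reorient_reorient_sdiff (hn : 1 ≤ n) (S : Finset ℕ) (i : ℕ) :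
    ttEntry (reorient (reorient A (Icc 1 n \ R)) S) n i =
      ttEntry (reorient (reorient A R) S) n i :=
  ttEntry_eq_of_neg hn (fun i j hj ↦ by
    simp only [reorient_eq_colSign_mul, colSign_sdiff hj, Units.val_neg]; ring) i

theorem isNeighborly_reorient_sdiff (hn : 1 ≤ n) (h : IsNeighborly (reorient A R) r n k) :
    IsNeighborly (reorient A (Icc 1 n \ R)) r n k := by
  intro S hS hSk
  rw [ttPositive, ttEntry_reorient_reorient_sdiff hn]
  exact h S hS hSk

theorem ttFollows_reorient_sdiff (hn : 1 ≤ n) {D : Finset ℕ} (h : ttFollows (reorient A R) n D) :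
    ttFollows (reorient A (Icc 1 n \ R)) n D := by
  simpa only [ttFollows, ttEntry_reorient_sdiff hn] using h

theorem exists_units_eq_of_isSignMatrix (hA : IsSignMatrix r n A) :
    ∃ σ : ℕ → ℕ → ℤˣ, ∀ i ∈ Icc 1 r, ∀ j ∈ Icc 1 n, A i j = σ i j := by
  refine ⟨fun i j ↦ if A i j = 1 then 1 else -1, fun i hi j hj ↦ ?_⟩
  obtain ⟨⟨hi₁, hir⟩, hj₁, hjn⟩ := And.intro (mem_Icc.1 hi) (mem_Icc.1 hj)
  rcases hA i j hi₁ hir hj₁ hjn with h | h <;> simp [h]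

-- Otherwise negating these columns gives a matrix alternating along `L`, whose top travel is
-- positive.
theorem lt_card_filter_of_isNeighborly (hσ : ∀ i ∈ Icc 1 r, ∀ j ∈ Icc 1 n, A i j = σ i j)
    (hR : IsNeighborly (reorient A R) r n k) {L : List ℕ} (hL : L.Pairwise (· < ·))
    (hLn : ∀ j ∈ L, j ∈ Icc 1 n) (hlen : L.length = r + 1) (c : ℤˣ) :
    k < #{j ∈ L.toFinset | chainSign σ 1 L j * colSign R j = -c} := by
  by_contra! hk
  set N := {j ∈ L.toFinset | chainSign σ 1 L j * colSign R j = -c}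
  refine hR N (fun j hj ↦ hLn j (List.mem_toFinset.1 (mem_filter.1 hj).1)) hk ?_
  have hsign : ∀ j ∈ L, colSign N j * colSign R j = c * chainSign σ 1 L j := by
    intro j hj
    have hflip := colSign_filter_mul (w := fun j ↦ chainSign σ 1 L j * colSign R j) (c := c)
      (List.mem_toFinset.2 hj)
    rw [← mul_right_inj (chainSign σ 1 L j), mul_left_comm, ← hflip, ← mul_assoc,
      Int.units_mul_self, one_mul, mul_left_comm, Int.units_mul_self, mul_one]
  have hentry : ∀ i ∈ Icc 1 r, ∀ j ∈ L, reorient (reorient A R) N i j =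
      ((c * (chainSign σ 1 L j * σ i j) : ℤˣ) : ℤ) := by
    intro i hi j hj
    rw [reorient_eq_colSign_mul, reorient_eq_colSign_mul, hσ i hi j (hLn j hj), ← mul_assoc,
      ← Units.val_mul, hsign j hj, ← Units.val_mul, mul_assoc]
  have halt : IsAlternating (reorient (reorient A R) N) 1 L := by
    refine (isAlternating_chainSign (σ := σ) (hL.imp ne_of_lt)).imp fun i hi hir a ha b hb hab ↦ ?_
    have hi : i ∈ Icc 1 r := mem_Icc.2 ⟨hi, by omega⟩
    rw [hentry i hi a ha, hentry i hi b hb]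
    exact fun h ↦ hab (mul_left_cancel (Units.ext h))
  match L, hlen with
  | a :: L, hlen =>
    rw [ttPositive, Nat.add_comm, ← Nat.succ.inj hlen]
    exact ttEntry_isSome_of_isAlternating le_rfl rfl (mem_Icc.1 (hLn a (by simp))).1 hL
      (fun b hb ↦ (mem_Icc.1 (hLn b (by simp [hb]))).2) halt

/-- The column signs `e` pair to `±1` with the signed circuit on each `2k + 3` columns, that is,
they disagree with it in `k + 1` or `k + 2` of these columns. -/
def IsBalanced (σ : ℕ → ℕ → ℤˣ) (n k : ℕ) (e : ℕ → ℤˣ) : Prop :=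
  ∀ L : List ℕ, L.Pairwise (· < ·) → (∀ j ∈ L, j ∈ Icc 1 n) → L.length = 2 * k + 3 →
    IsUnit (chainSum σ e 1 L)

theorem isBalanced_colSign (hσ : ∀ i ∈ Icc 1 (2 * k + 2), ∀ j ∈ Icc 1 n, A i j = σ i j)
    (hR : IsNeighborly (reorient A R) (2 * k + 2) n k) : IsBalanced σ n k (colSign R) := by
  intro L hL hLn hlen
  have hneg := lt_card_filter_of_isNeighborly hσ hR hL hLn hlen 1
  have hpos := lt_card_filter_of_isNeighborly hσ hR hL hLn hlen (-1)
  have hcard := card_filter_one_add_card_filter_neg_one (F := L.toFinset)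
    fun j ↦ chainSign σ 1 L j * colSign R j
  rw [List.toFinset_card_of_nodup (hL.imp ne_of_lt)] at hcard
  rw [neg_neg] at hpos
  rw [chainSum, sum_units_eq_card_sub_card, Int.isUnit_iff]
  omega

end Neighborly

section Balanced

variable {σ : ℕ → ℕ → ℤˣ} {n k : ℕ} {L : List ℕ} {e e' : ℕ → ℤˣ}

theorem exists_isUnit_chainSum_add_pair (hL : L.Pairwise (· < ·)) (hlen : L.length = 2 * k + 1)
    {a b : ℕ} (hLa : ∀ j ∈ L, 1 ≤ j ∧ j < a) (hab : a < b) (hbn : b ≤ n) :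
    ∃ τ : ℤˣ, ∀ e, IsBalanced σ n k e →
      IsUnit (chainSum σ e 1 L + τ * (e a - σ (2 * k + 2) a * σ (2 * k + 2) b * e b)) := by
  have hchain : (L ++ [a, b]).Pairwise (· < ·) := by
    simp only [List.pairwise_append, List.pairwise_pair, List.mem_pair]
    exact ⟨hL, hab, by grind⟩
  obtain ⟨c, hc⟩ := List.exists_mem_of_length_eq_add_one hlen
  have hmem : ∀ j ∈ L ++ [a, b], j ∈ Icc 1 n := by
    have := hLa c hc
    grind
  obtain ⟨τ, hτ⟩ := chainSum_append (σ := σ) (i := 1) (List.ne_nil_of_length_eq_add_one hlen)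
    (List.cons_ne_nil a [b]) (hchain.imp ne_of_lt)
  refine ⟨τ, fun e he ↦ ?_⟩
  have hunit := he _ hchain hmem (by simp [hlen])
  rwa [hτ, hlen, chainSum_pair hab.ne, add_comm 1] at hunit

theorem exists_isUnit_add_chainSum_pair (hL : L.Pairwise (· < ·)) (hlen : L.length = 2 * k + 1)
    {a b : ℕ} (hbL : ∀ j ∈ L, b < j ∧ j ≤ n) (hab : a < b) (ha : 1 ≤ a) :
    ∃ τ : ℤˣ, ∀ e, IsBalanced σ n k e →
      IsUnit (chainSum σ e 3 L + τ * (e a - σ 1 a * σ 1 b * e b)) := by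
  have hchain : ([a, b] ++ L).Pairwise (· < ·) := by
    simp only [List.pairwise_append, List.pairwise_pair, List.mem_pair]
    exact ⟨hab, hL, by grind⟩
  obtain ⟨c, hc⟩ := List.exists_mem_of_length_eq_add_one hlen
  have hmem : ∀ j ∈ [a, b] ++ L, j ∈ Icc 1 n := by
    have := hbL c hc
    grind
  obtain ⟨τ, hτ⟩ := chainSum_append (σ := σ) (i := 1) (List.cons_ne_nil a [b])
    (List.ne_nil_of_length_eq_add_one hlen) (hchain.imp ne_of_lt)
  have hswap : ∀ s t : ℤ, τ * (s + τ * t) = t + τ * s := fun s t ↦ by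
    linear_combination t * Int.units_coe_mul_self τ
  refine ⟨τ, fun e he ↦ ?_⟩
  have hunit := τ.isUnit.mul (he _ hchain hmem (by simp [hlen]))
  rwa [hτ, hswap, chainSum_pair hab.ne] at hunit

-- Two of the three signs `q j * e j` coincide, and their pair contributes `0`.
theorem isUnit_of_forall_isUnit_add_pair {f : ℤ} {p : ℕ} {q e : ℕ → ℤˣ}
    (h : ∀ a b, p ≤ a → a < b → b ≤ p + 2 →
      ∃ τ : ℤˣ, IsUnit (f + τ * (e a - q a * q b * e b))) : IsUnit f := by
  obtain ⟨a, b, hpa, hab, hbp, heq⟩ : ∃ a b, p ≤ a ∧ a < b ∧ b ≤ p + 2 ∧ q a * e a = q b * e b := by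
    have hmaps : Set.MapsTo (fun j ↦ q j * e j) (Icc p (p + 2)) (univ : Finset ℤˣ) :=
      fun _ _ ↦ mem_coe.2 (mem_univ _)
    obtain ⟨a, ha, b, hb, hab, heq⟩ := exists_ne_map_eq_of_card_lt_of_maps_to
      (by rw [card_univ, Fintype.card_units_int, Nat.card_Icc]; omega) hmaps
    rw [mem_Icc] at ha hb
    rcases hab.lt_or_gt with hab | hab
    · exact ⟨a, b, ha.1, hab, hb.2, heq⟩
    · exact ⟨b, a, hb.1, hab, ha.2, heq.symm⟩
  obtain ⟨τ, hτ⟩ := h a b hpa hab hbp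
  have hcancel : q a * q b * e b = e a := by
    rw [mul_assoc, ← heq, ← mul_assoc, Int.units_mul_self, one_mul]
  rwa [← Units.val_mul, ← Units.val_mul, hcancel, sub_self, mul_zero, add_zero] at hτ

theorem eq_neg_of_isUnit_add_two_mul {f : ℤ} {τ u : ℤˣ} (hf : IsUnit f)
    (h : IsUnit (f + τ * (u + u))) : f = -(τ * u) := by
  rw [Int.isUnit_iff] at hf h
  rcases Int.units_eq_one_or τ with rfl | rfl <;> rcases Int.units_eq_one_or u with rfl | rfl <;>
    simp only [Units.val_one, Units.val_neg] at h ⊢ <;> omega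

theorem eq_neg_of_isUnit_add_pair {f : ℤ} {τ : ℤˣ} {a b : ℕ} {q : ℕ → ℤˣ}
    (hf : IsUnit f) (h : IsUnit (f + τ * (e a - q a * q b * e b)))
    (heb : e b = -(q a * q b * e a)) : f = -(τ * e a) := by
  refine eq_neg_of_isUnit_add_two_mul hf ?_
  have hdouble : q a * q b * e b = -e a := by
    rw [heb, mul_neg, ← mul_assoc, Int.units_mul_self, one_mul]
  rwa [← Units.val_mul, ← Units.val_mul, hdouble, Units.val_neg, sub_neg_eq_add] at h

theorem prod_eq_prod_of_isBalanced_of_lt {U : Finset ℕ} (hU : #U = 2 * k + 1) {y z : ℕ}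
    (hUy : ∀ j ∈ U, 1 ≤ j ∧ j < y ∧ j + 3 ≤ n) (hyz : y < z) (hzn : z ≤ n)
    (he : IsBalanced σ n k e) (he' : IsBalanced σ n k e') (hy : e y = e' y) (hz : e z = e' z)
    (hez : e z = -(σ (2 * k + 2) y * σ (2 * k + 2) z * e y)) :
    ∏ j ∈ U, e j = ∏ j ∈ U, e' j := by
  obtain ⟨L, hL, hlen, rfl⟩ : ∃ L : List ℕ, L.Pairwise (· < ·) ∧ L.length = #U ∧ L.toFinset = U :=
    ⟨U.sort, U.sortedLT_sort.pairwise, U.length_sort _, U.sort_toFinset _⟩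
  rw [hU] at hlen
  simp only [List.mem_toFinset] at hUy
  obtain ⟨c, hc⟩ := List.exists_mem_of_length_eq_add_one hlen
  have hcn := (hUy c hc).2.2
  have hunit : ∀ f, IsBalanced σ n k f → IsUnit (chainSum σ f 1 L) := fun f hf ↦
    isUnit_of_forall_isUnit_add_pair (p := n - 2) fun a b ha hab hb ↦
      (exists_isUnit_chainSum_add_pair hL hlen (by grind) hab (by omega)).imp fun τ hτ ↦ hτ f hf
  obtain ⟨τ, hτ⟩ := exists_isUnit_chainSum_add_pair (σ := σ) hL hlen
    (fun j hj ↦ ⟨(hUy j hj).1, (hUy j hj).2.1⟩) hyz hzn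
  apply prod_eq_prod_of_chainSum_eq (σ := σ) (i := 1)
  rw [eq_neg_of_isUnit_add_pair (hunit e he) (hτ e he) hez,
    eq_neg_of_isUnit_add_pair (hunit e' he') (hτ e' he') (hy ▸ hz ▸ hez), hy]

theorem prod_eq_prod_of_isBalanced_of_gt {U : Finset ℕ} (hU : #U = 2 * k + 1) {x y : ℕ}
    (hUy : ∀ j ∈ U, y < j ∧ 4 ≤ j ∧ j ≤ n) (hxy : x < y) (hx : 1 ≤ x)
    (he : IsBalanced σ n k e) (he' : IsBalanced σ n k e') (hex : e x = e' x) (hy : e y = e' y)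
    (hey : e y = -(σ 1 x * σ 1 y * e x)) : ∏ j ∈ U, e j = ∏ j ∈ U, e' j := by
  obtain ⟨L, hL, hlen, rfl⟩ : ∃ L : List ℕ, L.Pairwise (· < ·) ∧ L.length = #U ∧ L.toFinset = U :=
    ⟨U.sort, U.sortedLT_sort.pairwise, U.length_sort _, U.sort_toFinset _⟩
  rw [hU] at hlen
  simp only [List.mem_toFinset] at hUy
  have hunit : ∀ f, IsBalanced σ n k f → IsUnit (chainSum σ f 3 L) := fun f hf ↦
    isUnit_of_forall_isUnit_add_pair (p := 1) fun a b ha hab hb ↦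
      (exists_isUnit_add_chainSum_pair hL hlen (by grind) hab ha).imp fun τ hτ ↦ hτ f hf
  obtain ⟨τ, hτ⟩ := exists_isUnit_add_chainSum_pair (σ := σ) hL hlen
    (fun j hj ↦ ⟨(hUy j hj).1, (hUy j hj).2.2⟩) hxy hx
  apply prod_eq_prod_of_chainSum_eq (σ := σ) (i := 3)
  rw [eq_neg_of_isUnit_add_pair (hunit e he) (hτ e he) hey,
    eq_neg_of_isUnit_add_pair (hunit e' he') (hτ e' he') (hex ▸ hy ▸ hey), hex]

theorem apply_eq_of_isBalanced_of_lt {x y z : ℕ} (he : IsBalanced σ n k e)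
    (he' : IsBalanced σ n k e') (hx : 1 ≤ x) (hxy : x < y) (hyz : y < z) (hzn : z ≤ n)
    (hxn : x + 3 ≤ n) (hky : 2 * k + 3 ≤ y) (hkn : 2 * k + 5 ≤ n) (hy : e y = e' y)
    (hz : e z = e' z) (hez : e z = -(σ (2 * k + 2) y * σ (2 * k + 2) z * e y)) : e x = e' x := by
  by_contra hne
  obtain ⟨U, hU, hUk, hprod⟩ := exists_subset_prod_ne_prod
    (mem_Icc.2 ⟨hx, by omega⟩ : x ∈ Icc 1 (min (y - 1) (n - 3))) hne (odd_two_mul_add_one k)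
    (by rw [Nat.card_Icc]; omega)
  refine hprod (prod_eq_prod_of_isBalanced_of_lt hUk (fun j hj ↦ ?_) hyz hzn he he' hy hz hez)
  have hj := mem_Icc.1 (hU hj)
  omega

theorem apply_eq_of_isBalanced_of_gt {x y z : ℕ} (he : IsBalanced σ n k e)
    (he' : IsBalanced σ n k e') (hx : 1 ≤ x) (hxy : x < y) (hyz : y < z) (hzn : z ≤ n)
    (hz : 4 ≤ z) (hyn : y + 2 * k + 2 ≤ n) (hkn : 2 * k + 5 ≤ n) (hex : e x = e' x)
    (hy : e y = e' y) (hey : e y = -(σ 1 x * σ 1 y * e x)) : e z = e' z := by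
  by_contra hne
  obtain ⟨U, hU, hUk, hprod⟩ := exists_subset_prod_ne_prod
    (mem_Icc.2 ⟨by omega, hzn⟩ : z ∈ Icc (max (y + 1) 4) n) hne (odd_two_mul_add_one k)
    (by rw [Nat.card_Icc]; omega)
  refine hprod (prod_eq_prod_of_isBalanced_of_gt hUk (fun j hj ↦ ?_) hxy hx he he' hex hy hey)
  have hj := mem_Icc.1 (hU hj)
  omega

theorem not_shatters_of_forall_isBalanced {𝒩 : Finset (Finset ℕ)}
    (h𝒩 : ∀ R ∈ 𝒩, IsBalanced σ n k (colSign R)) (hkn : 4 * k + 4 ≤ n) {p x y z : ℕ} (hx : 1 ≤ x)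
    (hxy : x < y) (hyz : y < z) (hzn : z ≤ n) (hp : 4 ≤ p) (hpn : p + 3 ≤ n) (hxp : x ≤ p)
    (hpz : p ≤ z) : ¬ 𝒩.Shatters {x, y, z} := by
  intro hsh
  rcases le_or_gt (2 * k + 3) y with hky | hky
  · have hex (c : ℤˣ) : ∃ e, IsBalanced σ n k e ∧ e x = c ∧ e y = 1 ∧
        e z = -(σ (2 * k + 2) y * σ (2 * k + 2) z) := by
      obtain ⟨R, hR, hRu⟩ := exists_colSign_eq_of_shatters hsh fun j ↦
        if j = x then c else if j = y then 1 else -(σ (2 * k + 2) y * σ (2 * k + 2) z)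
      exact ⟨colSign R, h𝒩 R hR, by grind, by grind, by grind⟩
    obtain ⟨e, he, hxe, hye, hze⟩ := hex 1
    obtain ⟨e', he', hxe', hye', hze'⟩ := hex (-1)
    have hxx := apply_eq_of_isBalanced_of_lt he he' hx hxy hyz hzn (by omega) hky (by omega)
      (hye.trans hye'.symm) (hze.trans hze'.symm) (by rw [hze, hye, mul_one])
    rw [hxe, hxe'] at hxx
    exact absurd hxx (by decide)
  · have hex (c : ℤˣ) : ∃ e, IsBalanced σ n k e ∧ e z = c ∧ e x = 1 ∧ e y = -(σ 1 x * σ 1 y) := by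
      obtain ⟨R, hR, hRu⟩ := exists_colSign_eq_of_shatters hsh fun j ↦
        if j = z then c else if j = x then 1 else -(σ 1 x * σ 1 y)
      exact ⟨colSign R, h𝒩 R hR, by grind, by grind, by grind⟩
    obtain ⟨e, he, hze, hxe, hye⟩ := hex 1
    obtain ⟨e', he', hze', hxe', hye'⟩ := hex (-1)
    have hzz := apply_eq_of_isBalanced_of_gt he he' hx hxy hyz hzn (by omega) (by omega) (by omega)
      (hxe.trans hxe'.symm) (hye.trans hye'.symm) (by rw [hye, hxe, mul_one])
    rw [hze, hze'] at hzz
    exact absurd hzz (by decide)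

theorem not_shatters_insert_pair {𝒩 : Finset (Finset ℕ)}
    (h𝒩 : ∀ R ∈ 𝒩, IsBalanced σ n k (colSign R)) (hkn : 4 * k + 4 ≤ n) {p a b : ℕ} (hp : 4 ≤ p)
    (hpn : p + 3 ≤ n) (ha : a ∈ (Icc 1 n).erase p) (hb : b ∈ (Icc 1 n).erase p) (hab : a ≠ b) :
    ¬ 𝒩.Shatters {p, a, b} := by
  wlog hlt : a < b generalizing a b
  · rw [pair_comm a b]
    exact this hb ha hab.symm (by omega)
  rw [mem_erase, mem_Icc] at ha hb
  rcases lt_or_gt_of_ne ha.1 with hap | hpa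
  · rw [insert_comm]
    rcases lt_or_gt_of_ne hb.1 with hbp | hpb
    · rw [pair_comm]
      exact not_shatters_of_forall_isBalanced h𝒩 hkn ha.2.1 hlt hbp (by omega) hp hpn hap.le le_rfl
    · exact not_shatters_of_forall_isBalanced h𝒩 hkn ha.2.1 hap hpb hb.2.2 hp hpn hap.le hpb.le
  · exact not_shatters_of_forall_isBalanced h𝒩 hkn (by omega) hpa hlt hb.2.2 hp hpn le_rfl
      (by omega)

end Balanced

section Travels

variable {A : ℕ → ℕ → ℤ} {r n k : ℕ}

theorem exists_notMem_of_isNeighborlyTravel {D : Finset ℕ} (h : IsNeighborlyTravel A r n k D)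
    {p : ℕ} (hp : p ∈ Icc 1 n) : ∃ R ⊆ Icc 1 n, p ∉ R ∧ ttFollows (reorient A R) n D ∧
      IsNeighborly (reorient A R) r n k := by
  obtain ⟨R, hR, hD, hnb⟩ := h
  have hn : 1 ≤ n := (mem_Icc.1 hp).1.trans (mem_Icc.1 hp).2
  by_cases hpR : p ∈ R
  · exact ⟨Icc 1 n \ R, sdiff_subset, fun h ↦ (mem_sdiff.1 h).2 hpR,
      ttFollows_reorient_sdiff hn hD, isNeighborly_reorient_sdiff hn hnb⟩
  · exact ⟨R, hR, hpR, hD, hnb⟩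

theorem ncard_le_card_filter_notMem {𝒟 : Set (Finset ℕ)}
    (h𝒟 : ∀ D ∈ 𝒟, IsNeighborlyTravel A r n k D) {𝒩 : Finset (Finset ℕ)}
    (h𝒩 : ∀ R ⊆ Icc 1 n, IsNeighborly (reorient A R) r n k → R ∈ 𝒩) {p : ℕ} (hp : p ∈ Icc 1 n) :
    𝒟.ncard ≤ #{R ∈ 𝒩 | p ∉ R} := by
  choose! g hgX hpg hgD hgn using
    fun D hD ↦ exists_notMem_of_isNeighborlyTravel (h𝒟 D hD) hp
  rw [← Set.ncard_coe_finset]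
  exact Set.ncard_le_ncard_of_injOn g
    (fun D hD ↦ mem_coe.2 (mem_filter.2 ⟨h𝒩 _ (hgX D hD) (hgn D hD), hpg D hD⟩))
    (fun D hD D' hD' hg ↦ eq_of_ttFollows (hgD D hD) (hg ▸ hgD D' hD')) (finite_toSet _)

end Travels

end LawrenceMatroid

open Finset LawrenceMatroid in
theorem statement_3_general (k n : ℕ) (hn : 7 ≤ n) (hkn : 4 * k + 4 ≤ n) (A : ℕ → ℕ → ℤ)
    (hA : IsSignMatrix (2 * k + 2) n A) :
    {D : Finset ℕ | IsPlainTravel (2 * k + 2) n D ∧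
      IsNeighborlyTravel A (2 * k + 2) n k D}.ncard ≤ n := by
  classical
  obtain ⟨σ, hσ⟩ := exists_units_eq_of_isSignMatrix hA
  let 𝒩 := {R ∈ (Icc 1 n).powerset | IsNeighborly (reorient A R) (2 * k + 2) n k}
  have h𝒩 {R} : R ∈ 𝒩 ↔ R ⊆ Icc 1 n ∧ IsNeighborly (reorient A R) (2 * k + 2) n k := by
    rw [mem_filter, mem_powerset]
  have h4 : 4 ∈ Icc 1 n := mem_Icc.2 ⟨by omega, by omega⟩
  calc {D | IsPlainTravel (2 * k + 2) n D ∧ IsNeighborlyTravel A (2 * k + 2) n k D}.ncard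
    _ ≤ #{R ∈ 𝒩 | 4 ∉ R} :=
      ncard_le_card_filter_notMem (fun D hD ↦ hD.2) (fun R hR hRn ↦ h𝒩.2 ⟨hR, hRn⟩) h4
    _ ≤ #(Icc 1 n) :=
      card_filter_notMem_le_of_not_shatters (fun R hR ↦ (h𝒩.1 hR).1)
        (fun R hR ↦ h𝒩.2 ⟨sdiff_subset, isNeighborly_reorient_sdiff (by omega) (h𝒩.1 hR).2⟩) h4
        fun a ha b hb ↦ not_shatters_insert_pair
          (fun R hR ↦ isBalanced_colSign hσ (h𝒩.1 hR).2) hkn le_rfl hn ha hb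
    _ = n := Nat.card_Icc 1 n

/-- For `k ≥ 1`, `r = 2k+2` and `n ≥ 6k+2`, every `r × n` sign matrix has
at most `n` `k`-neighborly plain travels. -/
theorem statement_3 (k n : ℕ) (hk : 1 ≤ k) (hn : 6 * k + 2 ≤ n)
    (A : ℕ → ℕ → ℤ) (hA : IsSignMatrix (2 * k + 2) n A) :
    {D : Finset ℕ | IsPlainTravel (2 * k + 2) n D ∧
      IsNeighborlyTravel A (2 * k + 2) n k D}.ncard ≤ n :=
  statement_3_general k n (by omega) (by omega) A hA
end

section
/- Let A = (a_{i,j}) and A' = (a'_{i,j}) be r×n sign matrices with r, n ≥ 1. Then B[A] = B[A'] if and only if there exist sign vectors ε ∈ {+1,−1}^r and δ ∈ {+1,−1}^n such that a'_{i,j} = ε_i·δ_j·a_{i,j} for all 1 ≤ i ≤ r and 1 ≤ j ≤ n. -/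
/-- The chessboard of an `r × n` sign matrix: the square `s(i,j)`, `1 ≤ i ≤ r-1`,
`1 ≤ j ≤ n-1`, is assigned the product `a_{i,j}·a_{i,j+1}·a_{i+1,j}·a_{i+1,j+1}`. -/
def chessboard (A : ℕ → ℕ → ℤ) (i j : ℕ) : ℤ :=
  A i j * A i (j + 1) * A (i + 1) j * A (i + 1) (j + 1)

/-
Let `c` be the entrywise product of `A` and `A'`. As all entries square to `1`, the chessboards of
`A` and `A'` agree exactly when the adjacent `2 × 2` minors of `c` vanish. The entries of `c` being
cancellable, vanishing then propagates from adjacent minors to all minors based at the corner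
`(1, 1)`, so `c` has rank one, and its two factors are the row and column signs taking `A` to `A'`.
Conversely, each row or column sign occurs either twice or not at all in a square.
-/

section AdjacentMinors

variable {M : Type*} [CommSemigroup M]

theorem mul_eq_mul_of_forall_succ {u v : ℕ → M} {m n k : ℕ}
    (hu : ∀ l, m ≤ l → l < n → IsLeftRegular (u l))
    (h : ∀ l, m ≤ l → l < n → u l * v (l + 1) = u (l + 1) * v l)
    (hmk : m ≤ k) (hkn : k ≤ n) : u m * v k = u k * v m := by
  induction k, hmk using Nat.le_induction with
  | base => rfl
  | succ k hmk ih =>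
    apply hu k hmk hkn
    calc u k * (u m * v (k + 1)) = u m * (u k * v (k + 1)) := mul_left_comm _ _ _
      _ = u m * (u (k + 1) * v k) := by rw [h k hmk hkn]
      _ = u (k + 1) * (u m * v k) := mul_left_comm _ _ _
      _ = u (k + 1) * (u k * v m) := by rw [ih (Nat.le_of_succ_le hkn)]
      _ = u k * (u (k + 1) * v m) := mul_left_comm _ _ _

theorem corner_minor_eq_of_adjacent_minors_eq {c : ℕ → ℕ → M} {p q r n i j : ℕ}
    (hc : ∀ i j, p ≤ i → i < r → q ≤ j → j ≤ n → IsLeftRegular (c i j))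
    (h : ∀ i j, p ≤ i → i < r → q ≤ j → j < n →
      c i j * c (i + 1) (j + 1) = c i (j + 1) * c (i + 1) j)
    (hpi : p ≤ i) (hir : i ≤ r) (hqj : q ≤ j) (hjn : j ≤ n) :
    c p q * c i j = c i q * c p j := by
  have adjacent_rows (k : ℕ) (hpk : p ≤ k) (hkr : k < r) :
      c k q * c (k + 1) j = c k j * c (k + 1) q :=
    mul_eq_mul_of_forall_succ (fun l hql hln => hc k l hpk hkr hql hln.le)
      (fun l => h k l hpk hkr) hqj hjn
  refine mul_eq_mul_of_forall_succ (u := (c · q)) (v := (c · j))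
    (fun k hpk hkr => hc k q hpk hkr le_rfl (hqj.trans hjn)) (fun k hpk hkr => ?_) hpi hir
  rw [adjacent_rows k hpk hkr, mul_comm]

end AdjacentMinors

section Involutions

variable {M : Type*} [CommMonoid M]

theorem mul_mul_self_eq_one {x y : M} (hx : x * x = 1) (hy : y * y = 1) :
    x * y * (x * y) = 1 := by
  rw [mul_mul_mul_comm, hx, hy, one_mul]

theorem mul_eq_mul_swap_of_mul_self_eq_one {a b a' b' : M} (ha : a * a = 1) (hb' : b' * b' = 1)
    (h : a * b = a' * b') : a * a' = b * b' :=
  calc a * a' = a * (a' * b') * b' := by rw [mul_assoc, mul_assoc, hb', mul_one]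
    _ = a * (a * b) * b' := by rw [h]
    _ = b * b' := by rw [← mul_assoc a a b, ha, one_mul]

theorem exists_eq_mul_of_adjacent_minors_eq {r n : ℕ} (hr : 1 ≤ r) (hn : 1 ≤ n) {c : ℕ → ℕ → M}
    (hc : ∀ i j, 1 ≤ i → i ≤ r → 1 ≤ j → j ≤ n → c i j * c i j = 1)
    (h : ∀ i j, 1 ≤ i → i < r → 1 ≤ j → j < n →
      c i j * c (i + 1) (j + 1) = c i (j + 1) * c (i + 1) j) :
    ∃ ε δ : ℕ → M,
      (∀ i, 1 ≤ i → i ≤ r → ε i * ε i = 1) ∧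
      (∀ j, 1 ≤ j → j ≤ n → δ j * δ j = 1) ∧
      (∀ i j, 1 ≤ i → i ≤ r → 1 ≤ j → j ≤ n → c i j = ε i * δ j) := by
  have h_corner : c 1 1 * c 1 1 = 1 := hc 1 1 le_rfl hr le_rfl hn
  refine ⟨fun i => c i 1, fun j => c 1 1 * c 1 j, fun i hi hir => hc i 1 hi hir le_rfl hn,
    fun j hj hjn => mul_mul_self_eq_one h_corner (hc 1 j le_rfl hr hj hjn),
    fun i j hi hir hj hjn => ?_⟩
  have h_regular (k l : ℕ) (hk : 1 ≤ k) (hkr : k < r) (hl : 1 ≤ l) (hln : l ≤ n) :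
      IsLeftRegular (c k l) :=
    isLeftRegular_of_mul_eq_one (hc k l hk hkr.le hl hln)
  calc c i j = c 1 1 * (c 1 1 * c i j) := by rw [← mul_assoc, h_corner, one_mul]
    _ = c 1 1 * (c i 1 * c 1 j) := by
      rw [corner_minor_eq_of_adjacent_minors_eq h_regular h hi hir hj hjn]
    _ = c i 1 * (c 1 1 * c 1 j) := mul_left_comm _ _ _

end Involutions

section CornerProd

variable {M : Type*} [CommMonoid M]

/-- The chessboard of a matrix over an arbitrary commutative monoid: the product of the four
corners of the unit square with smallest corner `(i, j)`. For integer matrices it is `chessboard`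
by definition. -/
def cornerProd (A : ℕ → ℕ → M) (i j : ℕ) : M :=
  A i j * A i (j + 1) * A (i + 1) j * A (i + 1) (j + 1)

theorem cornerProd_reorient (ε δ : ℕ → M) (A : ℕ → ℕ → M) (i j : ℕ) :
    cornerProd (fun i j => ε i * δ j * A i j) i j =
      ε i * ε i * (ε (i + 1) * ε (i + 1)) * (δ j * δ j * (δ (j + 1) * δ (j + 1))) *
        cornerProd A i j := by
  simp only [cornerProd]
  ac_rfl

theorem adjacent_minor_mul_eq_of_cornerProd_eq {A A' : ℕ → ℕ → M} {i j : ℕ}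
    (h₀₀ : A i j * A i j = 1) (h₁₁ : A (i + 1) (j + 1) * A (i + 1) (j + 1) = 1)
    (h₀₁ : A' i (j + 1) * A' i (j + 1) = 1) (h₁₀ : A' (i + 1) j * A' (i + 1) j = 1)
    (h : cornerProd A i j = cornerProd A' i j) :
    A i j * A' i j * (A (i + 1) (j + 1) * A' (i + 1) (j + 1)) =
      A i (j + 1) * A' i (j + 1) * (A (i + 1) j * A' (i + 1) j) := by
  rw [mul_mul_mul_comm (A i j), mul_mul_mul_comm (A i (j + 1))]
  refine mul_eq_mul_swap_of_mul_self_eq_one (mul_mul_self_eq_one h₀₀ h₁₁)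
    (mul_mul_self_eq_one h₀₁ h₁₀) ?_
  calc A i j * A (i + 1) (j + 1) * (A i (j + 1) * A (i + 1) j)
      = cornerProd A i j := by rw [cornerProd]; ac_rfl
    _ = cornerProd A' i j := h
    _ = A' i j * A' (i + 1) (j + 1) * (A' i (j + 1) * A' (i + 1) j) := by rw [cornerProd]; ac_rfl

theorem cornerProd_eq_of_eq_reorient {r n : ℕ} {A A' : ℕ → ℕ → M} {ε δ : ℕ → M}
    (hε : ∀ i, 1 ≤ i → i ≤ r → ε i * ε i = 1) (hδ : ∀ j, 1 ≤ j → j ≤ n → δ j * δ j = 1)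
    (h : ∀ i j, 1 ≤ i → i ≤ r → 1 ≤ j → j ≤ n → A' i j = ε i * δ j * A i j)
    {i j : ℕ} (hi : 1 ≤ i) (hir : i < r) (hj : 1 ≤ j) (hjn : j < n) :
    cornerProd A i j = cornerProd A' i j := by
  have hi' : 1 ≤ i + 1 := Nat.le_add_left 1 i
  have hj' : 1 ≤ j + 1 := Nat.le_add_left 1 j
  calc cornerProd A i j = cornerProd (fun i j => ε i * δ j * A i j) i j := by
        rw [cornerProd_reorient, hε i hi hir.le, hε (i + 1) hi' hir, hδ j hj hjn.le,
          hδ (j + 1) hj' hjn]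
        simp only [one_mul]
    _ = cornerProd A' i j := by
        rw [cornerProd, cornerProd, h i j hi hir.le hj hjn.le, h i (j + 1) hi hir.le hj' hjn,
          h (i + 1) j hi' hir hj hjn.le, h (i + 1) (j + 1) hi' hir hj' hjn]

theorem exists_reorient_of_cornerProd_eq {r n : ℕ} (hr : 1 ≤ r) (hn : 1 ≤ n) {A A' : ℕ → ℕ → M}
    (hA : ∀ i j, 1 ≤ i → i ≤ r → 1 ≤ j → j ≤ n → A i j * A i j = 1)
    (hA' : ∀ i j, 1 ≤ i → i ≤ r → 1 ≤ j → j ≤ n → A' i j * A' i j = 1)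
    (h : ∀ i j, 1 ≤ i → i < r → 1 ≤ j → j < n → cornerProd A i j = cornerProd A' i j) :
    ∃ ε δ : ℕ → M,
      (∀ i, 1 ≤ i → i ≤ r → ε i * ε i = 1) ∧
      (∀ j, 1 ≤ j → j ≤ n → δ j * δ j = 1) ∧
      (∀ i j, 1 ≤ i → i ≤ r → 1 ≤ j → j ≤ n → A' i j = ε i * δ j * A i j) := by
  have h_minors (i j : ℕ) (hi : 1 ≤ i) (hir : i < r) (hj : 1 ≤ j) (hjn : j < n) :=
    adjacent_minor_mul_eq_of_cornerProd_eq (hA i j hi hir.le hj hjn.le)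
      (hA (i + 1) (j + 1) (Nat.le_add_left 1 i) hir (Nat.le_add_left 1 j) hjn)
      (hA' i (j + 1) hi hir.le (Nat.le_add_left 1 j) hjn)
      (hA' (i + 1) j (Nat.le_add_left 1 i) hir hj hjn.le) (h i j hi hir hj hjn)
  obtain ⟨ε, δ, hε, hδ, h_factor⟩ :=
    exists_eq_mul_of_adjacent_minors_eq hr hn (c := fun i j => A i j * A' i j)
      (fun i j hi hir hj hjn =>
        mul_mul_self_eq_one (hA i j hi hir hj hjn) (hA' i j hi hir hj hjn)) h_minors
  refine ⟨ε, δ, hε, hδ, fun i j hi hir hj hjn => ?_⟩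
  rw [← h_factor i j hi hir hj hjn, mul_right_comm, hA i j hi hir hj hjn, one_mul]

theorem statement_9_general {r n : ℕ} (hr : 1 ≤ r) (hn : 1 ≤ n) {A A' : ℕ → ℕ → M}
    (hA : ∀ i j, 1 ≤ i → i ≤ r → 1 ≤ j → j ≤ n → A i j * A i j = 1)
    (hA' : ∀ i j, 1 ≤ i → i ≤ r → 1 ≤ j → j ≤ n → A' i j * A' i j = 1) :
    (∀ i j, 1 ≤ i → i < r → 1 ≤ j → j < n → cornerProd A i j = cornerProd A' i j) ↔
      ∃ ε δ : ℕ → M,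
        (∀ i, 1 ≤ i → i ≤ r → ε i * ε i = 1) ∧
        (∀ j, 1 ≤ j → j ≤ n → δ j * δ j = 1) ∧
        (∀ i j, 1 ≤ i → i ≤ r → 1 ≤ j → j ≤ n → A' i j = ε i * δ j * A i j) :=
  ⟨exists_reorient_of_cornerProd_eq hr hn hA hA', fun ⟨_, _, hε, hδ, h⟩ _ _ =>
    cornerProd_eq_of_eq_reorient hε hδ h⟩

end CornerProd

/-- Two `r × n` sign matrices have the same chessboard iff one is obtained from
the other by multiplying rows and columns by signs, i.e. `a'_{i,j} = ε_i·δ_j·a_{i,j}` for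
sign vectors `ε ∈ {±1}^r`, `δ ∈ {±1}^n`. -/
theorem statement_9 (r n : ℕ) (hr : 1 ≤ r) (hn : 1 ≤ n)
    (A A' : ℕ → ℕ → ℤ) (hA : IsSignMatrix r n A) (hA' : IsSignMatrix r n A') :
    (∀ i j, 1 ≤ i → i ≤ r - 1 → 1 ≤ j → j ≤ n - 1 →
        chessboard A i j = chessboard A' i j) ↔
      ∃ ε δ : ℕ → ℤ,
        (∀ i, 1 ≤ i → i ≤ r → ε i = 1 ∨ ε i = -1) ∧
        (∀ j, 1 ≤ j → j ≤ n → δ j = 1 ∨ δ j = -1) ∧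
        (∀ i j, 1 ≤ i → i ≤ r → 1 ≤ j → j ≤ n → A' i j = ε i * δ j * A i j) := by
  simp only [IsSignMatrix, ← mul_self_eq_one_iff, Nat.le_sub_one_iff_lt hr,
    Nat.le_sub_one_iff_lt hn] at hA hA' ⊢
  exact statement_9_general hr hn hA hA'
end

section
/- For integers n ≥ r+1 ≥ 2, the number of equivalence classes of r×n sign matrices under reorientation-equivalence is exactly 2^{(n−r−1)(r−1)}. (This is the number of reorientation classes of rank r Lawrence oriented matroids on n elements.) -/
/-- `g` encodes an increasing `r`-tuple `1 ≤ g 1 < g 2 < ⋯ < g r ≤ n` of columns. -/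
def IsIncrTuple (r n : ℕ) (g : ℕ → ℕ) : Prop :=
  1 ≤ g 1 ∧ g r ≤ n ∧ ∀ i, 1 ≤ i → i < r → g i < g (i + 1)

/-- The chirotope of an `r × n` sign matrix evaluated at the increasing tuple `g`:
`χ_A(g 1, …, g r) = ∏_{i=1}^r a_{i, g i}`. -/
def chirotope (r : ℕ) (A : ℕ → ℕ → ℤ) (g : ℕ → ℕ) : ℤ :=
  ∏ i ∈ Finset.Icc 1 r, A i (g i)

/-- Two `r × n` sign matrices are reorientation-equivalent if there exist `δ ∈ {±1}^n` and a
global sign `ε ∈ {±1}` with `χ_{A'}(j₁,…,j_r) = ε·δ_{j₁}⋯δ_{j_r}·χ_A(j₁,…,j_r)` for every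
increasing `r`-tuple `1 ≤ j₁ < ⋯ < j_r ≤ n`. -/
def ReorEquiv (r n : ℕ) (A A' : ℕ → ℕ → ℤ) : Prop :=
  ∃ δ : ℕ → ℤ, ∃ ε : ℤ,
    (∀ j, 1 ≤ j → j ≤ n → δ j = 1 ∨ δ j = -1) ∧ (ε = 1 ∨ ε = -1) ∧
    ∀ g : ℕ → ℕ, IsIncrTuple r n g →
      chirotope r A' g = ε * (∏ i ∈ Finset.Icc 1 r, δ (g i)) * chirotope r A g

/-
Dividing `χ_{A'}` by `χ_A` turns reorientation-equivalence into a statement about the single matrix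
`B = A' / A`: its products along increasing tuples depend only on the column signs. Increasing
tuples visit exactly the cells of the staircase `i ≤ j ≤ n - r + i`, and two tuples can be chosen to
differ in one entry only, so this means `B i j = ρ i * δ j` on the staircase. Such a factorisation
exists iff `B` has trivial cross-ratio on every `2 × 2` block of adjacent cells inside the
staircase. Hence the cross-ratios of `A` on the `(n - r - 1) * (r - 1)` blocks form a complete
invariant, and every pattern of values occurs, by taking partial products over rectangles.
-/

/-- The cells `(i, j)` of an `r × n` matrix visited by increasing `r`-tuples: `i ≤ j ≤ n - r + i`
with `1 ≤ i ≤ r`. The upper bound is written without truncated subtraction. -/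
def InStaircase (r n i j : ℕ) : Prop :=
  1 ≤ i ∧ i ≤ r ∧ i ≤ j ∧ j + r ≤ n + i

/-- The tuple `1, …, i - 1, n - r + i, …, n`. Replacing its `i`-th entry by any column `j` for which
`(i, j)` lies in the staircase keeps it increasing. -/
def extremeTuple (r n i : ℕ) : ℕ → ℕ :=
  fun k => if k < i then k else n - r + k

section Tuples

variable {r n i j : ℕ} {g : ℕ → ℕ}

lemma IsIncrTuple.apply_add_le_apply_add (hg : IsIncrTuple r n g) (hi : 1 ≤ i) (hij : i ≤ j)
    (hj : j ≤ r) : g i + j ≤ g j + i := by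
  induction j, hij using Nat.le_induction with
  | base => rfl
  | succ k hik ih =>
    have hstep := hg.2.2 k (hi.trans hik) hj
    have := ih (by omega)
    omega

lemma IsIncrTuple.inStaircase (hg : IsIncrTuple r n g) (hi : 1 ≤ i) (hir : i ≤ r) :
    InStaircase r n i (g i) := by
  have hlower := hg.apply_add_le_apply_add le_rfl hi hir
  have hupper := hg.apply_add_le_apply_add hi hir le_rfl
  obtain ⟨hfirst, hlast, -⟩ := hg
  exact ⟨hi, hir, by omega, by omega⟩

lemma InStaircase.isIncrTuple_update (h : InStaircase r n i j) :
    IsIncrTuple r n (Function.update (extremeTuple r n i) i j) := by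
  obtain ⟨_, _, _, _⟩ := h
  simp only [IsIncrTuple, Function.update_apply, extremeTuple]
  refine ⟨?_, ?_, fun k _ _ => ?_⟩ <;> split_ifs <;> omega

end Tuples

section CommGroup

variable {G : Type*} [CommGroup G] {r n : ℕ}

lemma apply_eq_of_prod_eq_const {C : ℕ → ℕ → G} {ε : G}
    (hC : ∀ g, IsIncrTuple r n g → ∏ k ∈ Finset.Icc 1 r, C k (g k) = ε) {i j j' : ℕ}
    (hj : InStaircase r n i j) (hj' : InStaircase r n i j') : C i j = C i j' := by
  have hi : i ∈ Finset.Icc 1 r := Finset.mem_Icc.2 ⟨hj.1, hj.2.1⟩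
  have h := (hC _ hj.isIncrTuple_update).trans (hC _ hj'.isIncrTuple_update).symm
  simp only [Function.apply_update C, Finset.prod_update_of_mem hi] at h
  exact mul_right_cancel h

/-- `B` is a product of a function of the row and a function of the column on the staircase. -/
def FactorsOnStaircase (r n : ℕ) (B : ℕ → ℕ → G) : Prop :=
  ∃ ρ δ : ℕ → G, ∀ i j, InStaircase r n i j → B i j = ρ i * δ j

lemma exists_prod_eq_iff_factorsOnStaircase {B : ℕ → ℕ → G} :
    (∃ (δ : ℕ → G) (ε : G), ∀ g, IsIncrTuple r n g →
      ∏ k ∈ Finset.Icc 1 r, B k (g k) = ε * ∏ k ∈ Finset.Icc 1 r, δ (g k)) ↔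
    FactorsOnStaircase r n B := by
  constructor
  · rintro ⟨δ, ε, h⟩
    have hconst : ∀ g, IsIncrTuple r n g → ∏ k ∈ Finset.Icc 1 r, B k (g k) / δ (g k) = ε := by
      intro g hg
      rw [Finset.prod_div_distrib, h g hg, mul_div_cancel_right]
    refine ⟨fun i => B i i / δ i, δ, fun i j hij => ?_⟩
    have hdiag : InStaircase r n i i := by grind [InStaircase]
    rw [← div_eq_iff_eq_mul]
    exact apply_eq_of_prod_eq_const (C := fun k l => B k l / δ l) hconst hij hdiag
  · rintro ⟨ρ, δ, h⟩
    refine ⟨δ, ∏ k ∈ Finset.Icc 1 r, ρ k, fun g hg => ?_⟩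
    rw [← Finset.prod_mul_distrib]
    refine Finset.prod_congr rfl fun k hk => h k (g k) ?_
    obtain ⟨hk₁, hkr⟩ := Finset.mem_Icc.1 hk
    exact hg.inStaircase hk₁ hkr

/-- The cross-ratio of the `2 × 2` block of `f` with upper left corner `(i, j)`; it is the
multiplicative second difference of `f`. -/
def crossRatio (f : ℕ → ℕ → G) (i j : ℕ) : G :=
  (f (i + 1) (j + 1) / f (i + 1) j) / (f i (j + 1) / f i j)

lemma crossRatio_div (f f' : ℕ → ℕ → G) (i j : ℕ) :
    crossRatio (f / f') i j = crossRatio f i j / crossRatio f' i j := by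
  simp only [crossRatio, Pi.div_apply, div_div_div_comm]

lemma crossRatio_prod_range (c : ℕ → ℕ → G) (i j : ℕ) :
    crossRatio (fun i j => ∏ l ∈ Finset.range j, ∏ k ∈ Finset.range i, c k l) i j = c i j := by
  simp only [crossRatio, Finset.prod_range_succ, mul_div_cancel_left]

/-- `B` has trivial cross-ratio on every `2 × 2` block of adjacent cells inside the staircase. Such
a block is recognised by its corners `(i + 1, j)` and `(i, j + 1)`, which force the other two. -/
def TrivialOnBlocks (r n : ℕ) (B : ℕ → ℕ → G) : Prop :=
  ∀ i j, InStaircase r n (i + 1) j → InStaircase r n i (j + 1) → crossRatio B i j = 1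

lemma FactorsOnStaircase.trivialOnBlocks {B : ℕ → ℕ → G} (hB : FactorsOnStaircase r n B) :
    TrivialOnBlocks r n B := by
  obtain ⟨ρ, δ, h⟩ := hB
  intro i j hlower hupper
  have hleft : InStaircase r n i j := by grind [InStaircase]
  have hright : InStaircase r n (i + 1) (j + 1) := by grind [InStaircase]
  rw [crossRatio, h _ _ hright, h _ _ hlower, h _ _ hupper, h _ _ hleft,
    mul_div_mul_left_eq_div, mul_div_mul_left_eq_div, div_self']

lemma TrivialOnBlocks.div_eq_div {B : ℕ → ℕ → G} (hB : TrivialOnBlocks r n B) {i i' j : ℕ}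
    (hii' : i ≤ i') (hi : InStaircase r n i (j + 1)) (hi' : InStaircase r n i' j) :
    B i (j + 1) / B i j = B i' (j + 1) / B i' j := by
  induction i', hii' using Nat.le_induction with
  | base => rfl
  | succ k hik ih =>
    have hupper : InStaircase r n k (j + 1) := by grind [InStaircase]
    have hleft : InStaircase r n k j := by grind [InStaircase]
    exact (ih hleft).trans (div_eq_one.1 (hB k j hi' hupper)).symm

lemma TrivialOnBlocks.factorsOnStaircase {B : ℕ → ℕ → G} (hB : TrivialOnBlocks r n B) :
    FactorsOnStaircase r n B := by
  -- Row `min k r` meets both columns `k` and `k + 1` inside the staircase as soon as some row does,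
  -- so it can serve as reference row for their ratio.
  let δ : ℕ → G := fun j => ∏ k ∈ Finset.range j, B (min k r) (k + 1) / B (min k r) k
  refine ⟨fun i => B i i / δ i, δ, fun i j hij => ?_⟩
  have hle : i ≤ j := hij.2.2.1
  rw [← div_eq_iff_eq_mul]
  induction j, hle using Nat.le_induction with
  | base => rfl
  | succ j hle ih =>
    have hj : InStaircase r n i j := by grind [InStaircase]
    have hmin : InStaircase r n (min j r) j := by grind [InStaircase]
    have hratio : B i (j + 1) / B i j = δ (j + 1) / δ j := by
      rw [Finset.prod_range_succ_div_prod]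
      exact hB.div_eq_div (le_min hle hij.2.1) hij hmin
    rw [← ih hj, div_eq_div_iff_div_eq_div, hratio]

lemma trivialOnBlocks_iff_factorsOnStaircase {B : ℕ → ℕ → G} :
    TrivialOnBlocks r n B ↔ FactorsOnStaircase r n B :=
  ⟨TrivialOnBlocks.factorsOnStaircase, FactorsOnStaircase.trivialOnBlocks⟩

/-- The upper left corners of the `2 × 2` blocks inside the staircase: the second coordinate of `p`
numbers the row, the first one the position within that row. -/
def blockCorner (r n : ℕ) (p : Fin (n - r - 1) × Fin (r - 1)) : ℕ × ℕ :=
  (p.2 + 1, p.2 + 2 + p.1)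

lemma blockCorner_injective (r n : ℕ) : Function.Injective (blockCorner r n) := by
  rintro ⟨a, b⟩ ⟨a', b'⟩ h
  simp only [blockCorner, Prod.mk.injEq] at h
  ext <;> dsimp only <;> omega

lemma mem_range_blockCorner {i j : ℕ} :
    (i, j) ∈ Set.range (blockCorner r n) ↔
      InStaircase r n (i + 1) j ∧ InStaircase r n i (j + 1) := by
  constructor
  · rintro ⟨⟨a, b⟩, h⟩
    simp only [blockCorner, Prod.mk.injEq] at h
    unfold InStaircase
    omega
  · rintro ⟨hlower, hupper⟩
    unfold InStaircase at *
    refine ⟨(⟨j - i - 1, by omega⟩, ⟨i - 1, by omega⟩), Prod.ext ?_ ?_⟩ <;>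
      dsimp only [blockCorner] <;> omega

/-- The cross-ratios of `f` on all `2 × 2` blocks inside the staircase, the complete invariant of
reorientation-equivalence. -/
def blockRatios (r n : ℕ) (f : ℕ → ℕ → G) (p : Fin (n - r - 1) × Fin (r - 1)) : G :=
  crossRatio f (blockCorner r n p).1 (blockCorner r n p).2

lemma blockRatios_surjective (r n : ℕ) :
    Function.Surjective (blockRatios r n : (ℕ → ℕ → G) → _) := by
  intro c
  let c' : ℕ → ℕ → G := fun k l => Function.extend (blockCorner r n) c 1 (k, l)
  refine ⟨fun i j => ∏ l ∈ Finset.range j, ∏ k ∈ Finset.range i, c' k l, funext fun p => ?_⟩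
  rw [blockRatios, crossRatio_prod_range]
  exact (blockCorner_injective r n).extend_apply c 1 p

lemma trivialOnBlocks_div_iff {f f' : ℕ → ℕ → G} :
    TrivialOnBlocks r n (f' / f) ↔ blockRatios r n f = blockRatios r n f' := by
  have hdiv (i j : ℕ) : crossRatio (f' / f) i j = 1 ↔ crossRatio f i j = crossRatio f' i j := by
    rw [crossRatio_div, div_eq_one, eq_comm]
  simp only [TrivialOnBlocks, ← and_imp, ← mem_range_blockCorner, hdiv]
  constructor
  · exact fun h => funext fun p => h _ _ ⟨p, rfl⟩
  · rintro h i j ⟨p, hp⟩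
    have := congrFun h p
    rwa [blockRatios, blockRatios, hp] at this

theorem exists_reorientation_iff_blockRatios_eq {f f' : ℕ → ℕ → G} :
    (∃ (δ : ℕ → G) (ε : G), ∀ g, IsIncrTuple r n g →
      ∏ k ∈ Finset.Icc 1 r, f' k (g k) =
        ε * (∏ k ∈ Finset.Icc 1 r, δ (g k)) * ∏ k ∈ Finset.Icc 1 r, f k (g k)) ↔
    blockRatios r n f = blockRatios r n f' := by
  rw [← trivialOnBlocks_div_iff, trivialOnBlocks_iff_factorsOnStaircase,
    ← exists_prod_eq_iff_factorsOnStaircase]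
  simp only [Pi.div_apply, Finset.prod_div_distrib, div_eq_iff_eq_mul]

end CommGroup

/-- The sign `a = ±1` as a unit of `ℤ`; every other integer is sent to `-1`. -/
def signUnit (a : ℤ) : ℤˣ :=
  if a = 1 then 1 else -1

lemma coe_signUnit {a : ℤ} (ha : a = 1 ∨ a = -1) : (signUnit a : ℤ) = a := by
  rcases ha with rfl | rfl <;> rfl

lemma signUnit_coe (u : ℤˣ) : signUnit u = u := by
  rcases Int.units_eq_one_or u with rfl | rfl <;> rfl

/-- The entries of a sign matrix as elements of the group `ℤˣ`. -/
def unitMatrix (A : ℕ → ℕ → ℤ) : ℕ → ℕ → ℤˣ :=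
  fun i j => signUnit (A i j)

section Signs

variable {r n : ℕ} {A A' : ℕ → ℕ → ℤ} {g : ℕ → ℕ}

lemma IsIncrTuple.apply_mem_Icc (hg : IsIncrTuple r n g) {i : ℕ} (hi : i ∈ Finset.Icc 1 r) :
    g i ∈ Finset.Icc 1 n := by
  rw [Finset.mem_Icc] at hi ⊢
  have hcell := hg.inStaircase hi.1 hi.2
  unfold InStaircase at hcell
  omega

lemma IsSignMatrix.coe_prod_unitMatrix (hA : IsSignMatrix r n A) (hg : IsIncrTuple r n g) :
    ((∏ k ∈ Finset.Icc 1 r, unitMatrix A k (g k) : ℤˣ) : ℤ) = chirotope r A g := by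
  rw [Units.coe_prod, chirotope]
  refine Finset.prod_congr rfl fun k hk => coe_signUnit ?_
  obtain ⟨hlower, hupper⟩ := Finset.mem_Icc.1 (hg.apply_mem_Icc hk)
  obtain ⟨hk₁, hkr⟩ := Finset.mem_Icc.1 hk
  exact hA k (g k) hk₁ hkr hlower hupper

lemma coe_prod_signUnit {δ : ℕ → ℤ} (hδ : ∀ j, 1 ≤ j → j ≤ n → δ j = 1 ∨ δ j = -1)
    (hg : IsIncrTuple r n g) :
    ((∏ k ∈ Finset.Icc 1 r, signUnit (δ (g k)) : ℤˣ) : ℤ) = ∏ k ∈ Finset.Icc 1 r, δ (g k) :=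
  have hrows : IsSignMatrix r n fun _ => δ := fun _ j _ _ => hδ j
  hrows.coe_prod_unitMatrix hg

lemma reorEquiv_iff_exists_units (hA : IsSignMatrix r n A) (hA' : IsSignMatrix r n A') :
    ReorEquiv r n A A' ↔ ∃ (δ : ℕ → ℤˣ) (ε : ℤˣ), ∀ g, IsIncrTuple r n g →
      ∏ k ∈ Finset.Icc 1 r, unitMatrix A' k (g k) =
        ε * (∏ k ∈ Finset.Icc 1 r, δ (g k)) * ∏ k ∈ Finset.Icc 1 r, unitMatrix A k (g k) := by
  constructor
  · rintro ⟨δ, ε, hδ, hε, h⟩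
    refine ⟨fun j => signUnit (δ j), signUnit ε, fun g hg => Units.ext ?_⟩
    rw [Units.val_mul, Units.val_mul, hA.coe_prod_unitMatrix hg, hA'.coe_prod_unitMatrix hg,
      coe_signUnit hε, coe_prod_signUnit hδ hg, h g hg]
  · rintro ⟨δ, ε, h⟩
    refine ⟨fun j => δ j, ε, fun j _ _ => Int.isUnit_iff.1 (δ j).isUnit,
      Int.isUnit_iff.1 ε.isUnit, fun g hg => ?_⟩
    rw [← hA.coe_prod_unitMatrix hg, ← hA'.coe_prod_unitMatrix hg, h g hg, Units.val_mul,
      Units.val_mul, Units.coe_prod]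

theorem reorEquiv_iff_blockRatios_eq (hA : IsSignMatrix r n A) (hA' : IsSignMatrix r n A') :
    ReorEquiv r n A A' ↔
      blockRatios r n (unitMatrix A) = blockRatios r n (unitMatrix A') := by
  rw [reorEquiv_iff_exists_units hA hA', exists_reorientation_iff_blockRatios_eq]

theorem exists_isSignMatrix_blockRatios_eq (c : Fin (n - r - 1) × Fin (r - 1) → ℤˣ) :
    ∃ A, IsSignMatrix r n A ∧ blockRatios r n (unitMatrix A) = c := by
  obtain ⟨f, rfl⟩ := blockRatios_surjective r n c
  refine ⟨fun i j => f i j, fun i j _ _ _ _ => Int.isUnit_iff.1 (f i j).isUnit, ?_⟩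
  have hunit : unitMatrix (fun i j => f i j) = f := funext₂ fun i j => signUnit_coe (f i j)
  rw [hunit]

end Signs

lemma ncard_setOf_classes_eq_card {α β : Type*} {P : α → Prop} {R : α → α → Prop} {f : α → β}
    (hR : ∀ ⦃a b⦄, P a → P b → (R a b ↔ f a = f b)) (hf : ∀ c, ∃ a, P a ∧ f a = c) :
    {C : Set α | ∃ a, P a ∧ C = {b | P b ∧ R a b}}.ncard = Nat.card β := by
  let fiber : β → Set α := fun c => {b | P b ∧ f b = c}
  have hclass {a : α} (ha : P a) : {b | P b ∧ R a b} = fiber (f a) :=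
    Set.ext fun b => and_congr_right fun hb => (hR ha hb).trans eq_comm
  have hrange : {C : Set α | ∃ a, P a ∧ C = {b | P b ∧ R a b}} = Set.range fiber := by
    ext C
    constructor
    · rintro ⟨a, ha, rfl⟩
      exact ⟨f a, (hclass ha).symm⟩
    · rintro ⟨c, rfl⟩
      obtain ⟨a, ha, rfl⟩ := hf c
      exact ⟨a, ha, (hclass ha).symm⟩
  have hinj : Function.Injective fiber := by
    intro c c' h
    obtain ⟨a, ha, rfl⟩ := hf c
    have hmem : a ∈ fiber c' := h ▸ ⟨ha, rfl⟩
    exact hmem.2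
  rw [hrange, ← Nat.card_coe_set_eq, Nat.card_range_of_injective hinj]

/-- For `n ≥ r+1 ≥ 2`, the number of equivalence classes of `r × n` sign
matrices under reorientation-equivalence is exactly `2^{(n-r-1)(r-1)}` (the number of
reorientation classes of rank `r` Lawrence oriented matroids on `n` elements). -/
theorem statement_10 (r n : ℕ) (hr : 1 ≤ r) (hn : r + 1 ≤ n) :
    {C : Set (ℕ → ℕ → ℤ) | ∃ A, IsSignMatrix r n A ∧
        C = {A' | IsSignMatrix r n A' ∧ ReorEquiv r n A A'}}.ncard =
      2 ^ ((n - r - 1) * (r - 1)) := by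
  rw [ncard_setOf_classes_eq_card (fun _ _ => reorEquiv_iff_blockRatios_eq)
    exists_isSignMatrix_blockRatios_eq, Nat.card_fun, Nat.card_prod, Nat.card_fin, Nat.card_fin,
    Nat.card_eq_fintype_card, Fintype.card_units_int]
end

section
/- Let k ≥ 1, r ≥ 2k+2 and n ≥ r+1 be integers. Then F(r−1, n−1, k) + F(r, n−1, k) < F(r, n, k). -/
/-- `F(r,n,k) = (2((n-r) + C(r,k+1) + 2^{r-1}))^{r-1-2k} / (r-1-2k)!` as a rational number. -/
def F (r n k : ℕ) : ℚ :=
  (2 * (((n - r : ℕ) : ℚ) + (r.choose (k + 1) : ℚ) + 2 ^ (r - 1))) ^ (r - 1 - 2 * k) /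
    (Nat.factorial (r - 1 - 2 * k) : ℚ)

/-!
Since `x ^ p / p!` is the derivative of the convex function `x ^ (p + 1) / (p + 1)!` on `[0, ∞)`,
increasing `x` by `2` increases the latter by at least twice the former. Write `F r n k` as
`(2 * a) ^ (p + 1) / (p + 1)!`. Passing from `n - 1` to `n` increases `2 * a` by exactly `2`, and
`F (r - 1) (n - 1) k` is at most the derivative at the old value of `2 * a`.
-/

theorem pow_succ_div_factorial_add_le {K : Type*} [Field K] [LinearOrder K]
    [IsStrictOrderedRing K] {x y : K} (hx : 0 ≤ x) (hxy : 0 ≤ 2 * x + y) (p : ℕ) :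
    x ^ (p + 1) / (p + 1).factorial + y * (x ^ p / p.factorial) ≤
      (x + y) ^ (p + 1) / (p + 1).factorial := by
  have tangent : x ^ (p + 1) + (p + 1) * x ^ p * y ≤ (x + y) ^ (p + 1) := by
    simpa only [Nat.cast_succ, Nat.add_sub_cancel] using pow_add_mul_le_add_pow hx hxy (p + 1)
  have factorial_ne_zero : (p.factorial : K) ≠ 0 := mod_cast p.factorial_ne_zero
  calc
    x ^ (p + 1) / (p + 1).factorial + y * (x ^ p / p.factorial)
      = (x ^ (p + 1) + (p + 1) * x ^ p * y) / (p + 1).factorial := by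
        rw [Nat.factorial_succ]
        push_cast
        field_simp
    _ ≤ (x + y) ^ (p + 1) / (p + 1).factorial := by gcongr

namespace F

/-- Half of the number whose power is the numerator of `F r n k`. As in `F`, the subtractions
`n - r` and `r - 1` are truncated. -/
def base (r n k : ℕ) : ℚ :=
  ((n - r : ℕ) : ℚ) + (r.choose (k + 1) : ℚ) + 2 ^ (r - 1)

theorem base_pos (r n k : ℕ) : 0 < base r n k := by
  unfold base
  positivity

theorem base_add_one_right {r n : ℕ} (h : r ≤ n) (k : ℕ) :
    base r (n + 1) k = base r n k + 1 := by
  simp only [base, Nat.succ_sub h, Nat.cast_succ]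
  ring

-- The doubling of `2 ^ (r - 1)` makes up for the loss of `1` in `n - r`.
theorem base_le_base_add_one_left {r : ℕ} (hr : 1 ≤ r) (n k : ℕ) :
    base r n k ≤ base (r + 1) n k := by
  have sub_le : ((n - r : ℕ) : ℚ) ≤ (n - (r + 1) : ℕ) + 1 := by
    exact_mod_cast (by omega : n - r ≤ n - (r + 1) + 1)
  have choose_le : (r.choose (k + 1) : ℚ) ≤ (r + 1).choose (k + 1) := by
    exact_mod_cast Nat.choose_le_choose (k + 1) r.le_succ
  have two_pow_eq : (2 : ℚ) ^ r = 2 ^ (r - 1) * 2 := (pow_sub_one_mul (by omega) 2).symm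
  have one_le_two_pow : (1 : ℚ) ≤ 2 ^ (r - 1) := one_le_pow₀ one_le_two
  simp only [base, Nat.add_sub_cancel]
  linarith

theorem eq_pow_div_factorial {r k p : ℕ} (hr : r = 2 * k + 1 + p) (n : ℕ) :
    F r n k = (2 * base r n k) ^ p / p.factorial := by
  rw [F, base, show r - 1 - 2 * k = p by omega]

theorem le_pow_base_add_one_div_factorial {r k p : ℕ} (hr : r = 2 * k + 1 + p) (n : ℕ) :
    F r n k ≤ (2 * base (r + 1) n k) ^ p / p.factorial := by
  have base_nonneg : 0 ≤ base r n k := (base_pos r n k).le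
  rw [eq_pow_div_factorial hr]
  gcongr
  exact base_le_base_add_one_left (by omega) n k

end F

/-- For `k ≥ 1`, `r ≥ 2k+2` and `n ≥ r+1`,
`F(r-1, n-1, k) + F(r, n-1, k) < F(r, n, k)`. -/
theorem statement_12 (k r n : ℕ) (hk : 1 ≤ k) (hr : 2 * k + 2 ≤ r) (hn : r + 1 ≤ n) :
    F (r - 1) (n - 1) k + F r (n - 1) k < F r n k := by
  obtain ⟨p, rfl⟩ : ∃ p, r = 2 * k + 1 + p + 1 := ⟨r - (2 * k + 2), by omega⟩
  obtain ⟨m, rfl⟩ : ∃ m, n = m + 1 := ⟨n - 1, by omega⟩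
  simp only [Nat.add_sub_cancel]
  set r := 2 * k + 1 + p with r_eq
  set x := 2 * F.base (r + 1) m k with x_eq
  have x_pos : 0 < x := mul_pos two_pos (F.base_pos _ _ _)
  have F_left : F r m k ≤ x ^ p / p.factorial := F.le_pow_base_add_one_div_factorial r_eq m
  have F_old : F (r + 1) m k = x ^ (p + 1) / (p + 1).factorial :=
    F.eq_pow_div_factorial (by omega) m
  have F_new : F (r + 1) (m + 1) k = (x + 2) ^ (p + 1) / (p + 1).factorial := by
    rw [F.eq_pow_div_factorial (p := p + 1) (by omega), F.base_add_one_right (by omega),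
      mul_add_one, x_eq]
  have derivative_pos : 0 < x ^ p / p.factorial := by positivity
  have tangent : x ^ (p + 1) / (p + 1).factorial + 2 * (x ^ p / p.factorial) ≤
      (x + 2) ^ (p + 1) / (p + 1).factorial :=
    pow_succ_div_factorial_add_le x_pos.le (by linarith) p
  linarith
end
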